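/- If g = sp_{2n}(ℂ), then for every nilradical n of a standard parabolic subalgebra of g, the coadjoint representation (n : n*) has a generic stabiliser. -/

import Mathlib

open Module LieAlgebra
open scoped Classical

noncomputable section

/-! ### Generalities: coadjoint stabilisers, index, Frobenius semiradical -/

/-- The stabiliser `q^ξ = {x : q | ξ([x, q]) = 0}` of `ξ ∈ q*` for the coadjoint
representation of a Lie algebra `q`. -/
def coadStab (𝕜 : Type*) (Q : Type*) [CommRing 𝕜] [LieRing Q] [LieAlgebra 𝕜 Q]
    (ξ : Module.Dual 𝕜 Q) : Submodule 𝕜 Q where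
  carrier := {x | ∀ y, ξ ⁅x, y⁆ = 0}
  add_mem' := by
    intro a b ha hb y
    rw [Set.mem_setOf_eq] at ha hb
    rw [add_lie, map_add, ha y, hb y, add_zero]
  zero_mem' := by intro y; rw [zero_lie, map_zero]
  smul_mem' := by
    intro c x hx y
    rw [Set.mem_setOf_eq] at hx
    rw [smul_lie, map_smul, hx y, smul_zero]

/-- The index of a Lie algebra: the minimal dimension of a coadjoint stabiliser. -/
def lieIndex (𝕜 : Type*) (Q : Type*) [CommRing 𝕜] [LieRing Q] [LieAlgebra 𝕜 Q] : ℕ :=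
  ⨅ ξ : Module.Dual 𝕜 Q, Module.finrank 𝕜 (coadStab 𝕜 Q ξ)

/-- `ξ ∈ q*` is regular if its stabiliser has minimal dimension. -/
def IsRegularDual (𝕜 : Type*) (Q : Type*) [CommRing 𝕜] [LieRing Q] [LieAlgebra 𝕜 Q]
    (ξ : Module.Dual 𝕜 Q) : Prop :=
  Module.finrank 𝕜 (coadStab 𝕜 Q ξ) = lieIndex 𝕜 Q

/-- The Frobenius semiradical `F(q) = Σ_{ξ regular} q^ξ`. -/
def frobeniusSemiradical (𝕜 : Type*) (Q : Type*) [CommRing 𝕜] [LieRing Q] [LieAlgebra 𝕜 Q] :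
    Submodule 𝕜 Q :=
  ⨆ ξ : {ξ : Module.Dual 𝕜 Q // IsRegularDual 𝕜 Q ξ}, coadStab 𝕜 Q ξ.1

/-! ### Zariski topology on a complex vector space -/

/-- The Zariski topology on a complex vector space: generated by the complements of zero
sets of polynomial functions (elements of the subalgebra of functions generated by the
linear functionals). -/
def zariskiTop (V : Type*) [AddCommGroup V] [Module ℂ V] : TopologicalSpace V :=
  TopologicalSpace.generateFrom
    {U : Set V | ∃ p ∈ Algebra.adjoin ℂ (Set.range fun l : Module.Dual ℂ V => (l : V → ℂ)),
      U = {v | p v ≠ 0}}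

/-- Zariski-open subset of a complex vector space. -/
def zOpen {V : Type*} [AddCommGroup V] [Module ℂ V] (s : Set V) : Prop :=
  (zariskiTop V).IsOpen s

/-- Zariski-dense subset of a complex vector space. -/
def zDense {V : Type*} [AddCommGroup V] [Module ℂ V] (s : Set V) : Prop :=
  @Dense V (zariskiTop V) s

/-- The dimension of a subset of a complex vector space: the (topological) Krull dimension
with respect to the Zariski topology. -/
def zDim {V : Type*} [AddCommGroup V] [Module ℂ V] (s : Set V) : WithBot ℕ∞ :=
  letI := zariskiTop V
  topologicalKrullDim s

/-! ### Exponentials and stabilisers in the concrete model `n* ≅ n⁻` -/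

/-- The (truncated) exponential of a nilpotent endomorphism. For `x` in a nilradical `n`,
`nilExp (ad x)` is the adjoint action of the element `exp x` of the unipotent group
`N = exp(n)`; since `exp : n → N` is bijective, every element of `N` is of this form. -/
def nilExp {L : Type*} [AddCommGroup L] [Module ℂ L] (f : Module.End ℂ L) : Module.End ℂ L :=
  ∑ i ∈ Finset.range (Module.finrank ℂ L + 1), ((i.factorial : ℂ)⁻¹) • f ^ i

/-- For `v ∈ n⁻ ≅ n*`, the stabiliser of the linear functional `κ(v, ·)|_n` inside a (possibly
larger) subalgebra `q`, namely `{x ∈ q | κ(v, [x, n]) = 0}`, where `κ` is the Killing form.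
For `q = n` this is the coadjoint stabiliser `n^v`. -/
def killStab {L : Type*} [LieRing L] [LieAlgebra ℂ L] (v : L) (n q : LieSubalgebra ℂ L) :
    Submodule ℂ L where
  carrier := {x | x ∈ q ∧ ∀ y ∈ n, killingForm ℂ L v ⁅x, y⁆ = 0}
  add_mem' := by
    rintro a b ⟨ha, ha'⟩ ⟨hb, hb'⟩
    refine ⟨q.add_mem ha hb, fun y hy => ?_⟩
    rw [add_lie, map_add, ha' y hy, hb' y hy, add_zero]
  zero_mem' := ⟨q.zero_mem, fun y hy => by rw [zero_lie, map_zero]⟩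
  smul_mem' := by
    rintro c x ⟨hx, hx'⟩
    refine ⟨q.smul_mem c hx, fun y hy => ?_⟩
    rw [smul_lie, map_smul, hx' y hy, smul_zero]

/-! ### Triangular decompositions, root data and the Kostant cascade -/

/-- The support of a root (in simple-root coordinates). -/
def fsupp {SR : Type*} [Fintype SR] (γ : SR → ℤ) : Finset SR :=
  Finset.univ.filter fun a => γ a ≠ 0

/-- The data of a triangular decomposition of a complex simple Lie algebra `L`:
a Cartan subalgebra, a root-space decomposition indexed by the coordinates of the
roots with respect to the simple roots `SR`, the highest root, and a compatible
family of projections onto sums of root spaces. -/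
structure TriangularData (L : Type*) [LieRing L] [LieAlgebra ℂ L]
    (SR : Type*) [Fintype SR] [DecidableEq SR] where
  /-- the set of all roots, written in simple-root coordinates -/
  R : Finset (SR → ℤ)
  /-- the root space attached to `γ`; `rs 0` is the Cartan subalgebra, `rs γ = ⊥` off roots -/
  rs : (SR → ℤ) → Submodule ℂ L
  /-- the Cartan subalgebra `t` -/
  cartan : LieSubalgebra ℂ L
  rs_zero : rs 0 = cartan.toSubmodule
  rs_dim : ∀ γ ∈ R, Module.finrank ℂ (rs γ) = 1
  rs_bot : ∀ γ : SR → ℤ, γ ≠ 0 → γ ∉ R → rs γ = ⊥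
  root_ne_zero : ∀ γ ∈ R, γ ≠ 0
  root_neg : ∀ γ ∈ R, -γ ∈ R
  root_pos_or_neg : ∀ γ ∈ R, (∀ a, 0 ≤ γ a) ∨ (∀ a, γ a ≤ 0)
  root_single : ∀ a : SR, Pi.single a 1 ∈ R
  /-- the highest root `θ` -/
  theta : SR → ℤ
  theta_mem : theta ∈ R
  theta_highest : ∀ γ ∈ R, γ ≤ theta
  bracket_mem : ∀ γ δ : SR → ℤ, ∀ x ∈ rs γ, ∀ y ∈ rs δ, ⁅x, y⁆ ∈ rs (γ + δ)
  isInternal : DirectSum.IsInternal (fun γ : {γ : SR → ℤ // γ = 0 ∨ γ ∈ R} => rs γ.1)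
  /-- `proj S` is the projection onto `⊕_{γ ∈ S} rs γ` along `⊕_{γ ∉ S} rs γ` -/
  proj : Set (SR → ℤ) → (L →ₗ[ℂ] L)
  proj_mem : ∀ (S : Set (SR → ℤ)) (x : L), proj S x ∈ ⨆ γ ∈ S, rs γ
  proj_compl : ∀ (S : Set (SR → ℤ)) (x : L), x - proj S x ∈ ⨆ γ ∈ Sᶜ, rs γ

namespace TriangularData

variable {L : Type*} [LieRing L] [LieAlgebra ℂ L]
  {SR : Type*} [Fintype SR] [DecidableEq SR]
  (td : TriangularData L SR)

/-- The set `Δ⁺` of positive roots. -/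
def posR : Finset (SR → ℤ) := td.R.filter fun γ => ∀ a, 0 ≤ γ a

/-- The set of roots `Δ(n_T)` of the nilradical `n_T` attached to a set `T` of simple
roots: the positive roots having a strictly positive coefficient on some element of `T`. -/
def nilRoots (T : Finset SR) : Finset (SR → ℤ) :=
  td.posR.filter fun γ => ∃ a ∈ T, 0 < γ a

/-- The nilradical `n_T` of the standard parabolic subalgebra `p_T`. -/
def nilrad (T : Finset SR) : LieSubalgebra ℂ L :=
  LieSubalgebra.lieSpan ℂ L (⋃ γ ∈ (td.nilRoots T : Set (SR → ℤ)), (td.rs γ : Set L))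

/-- The Borel subalgebra `b = t ⊕ u` (as a subspace). -/
def borelSub : Submodule ℂ L :=
  td.rs 0 ⊔ ⨆ γ ∈ (td.posR : Set (SR → ℤ)), td.rs γ

/-- The parabolic subalgebra `p_T` (as a subspace): everything except `n_T⁻`. -/
def parabSub (T : Finset SR) : Submodule ℂ L :=
  td.rs 0 ⊔ ⨆ γ ∈ {γ : SR → ℤ | γ ∈ td.R ∧ -γ ∉ td.nilRoots T}, td.rs γ

/-- The set of roots of the opposite nilradical `n_T⁻`. -/
def negSet (T : Finset SR) : Set (SR → ℤ) := (fun γ => -γ) '' (td.nilRoots T : Set (SR → ℤ))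

/-- The opposite nilradical `n_T⁻ ⊆ u⁻`, which is identified with `n_T*` via the
Killing form and the decomposition `g = p_T ⊕ n_T⁻`. -/
def negNilSub (T : Finset SR) : Submodule ℂ L := ⨆ γ ∈ td.negSet T, td.rs γ

/-- The Heisenberg subset `H_β` attached to a positive root `β`: the positive roots in
the root subsystem generated by `supp β` that are not orthogonal to `β`. -/
def heisRoots (β : SR → ℤ) : Finset (SR → ℤ) :=
  td.posR.filter fun γ => fsupp γ ⊆ fsupp β ∧ (γ = β ∨ β - γ ∈ td.R)

/-- `Φ(β) = Π ∩ H_β`. -/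
def Phi (β : SR → ℤ) : Finset SR :=
  Finset.univ.filter fun a => Pi.single a 1 ∈ td.heisRoots β

/-- `K` is the Kostant cascade: a maximal set of pairwise strongly orthogonal positive
roots, containing the highest root, such that each `β ∈ K` is the highest root of the root
subsystem generated by its support and such that the attached Heisenberg subsets
partition `Δ⁺`. -/
structure IsCascade (K : Finset (SR → ℤ)) : Prop where
  subset_pos : K ⊆ td.posR
  theta_mem : td.theta ∈ K
  strong_orth : ∀ β ∈ K, ∀ β' ∈ K, β ≠ β' → β + β' ∉ td.R ∧ β - β' ∉ td.R
  highest : ∀ β ∈ K, ∀ γ ∈ td.posR, fsupp γ ⊆ fsupp β → γ ≤ β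
  partition : ∀ γ ∈ td.posR, ∃! β, β ∈ K ∧ γ ∈ td.heisRoots β

/-- `K(n_T) = K ∩ Δ(n_T)`. -/
def cascadeK (K : Finset (SR → ℤ)) (T : Finset SR) : Finset (SR → ℤ) := K ∩ td.nilRoots T

/-- The set of simple roots of the optimisation of `n_T`, namely
`T̃ = ⋃_{β ∈ K(n_T)} Φ(β)`; the optimisation of `n_T` is `n_{T̃}`. -/
def optT (K : Finset (SR → ℤ)) (T : Finset SR) : Finset SR :=
  (td.cascadeK K T).biUnion td.Phi

/-- The cascade subspace `E = ⊕_{β ∈ K(n_T)} g_{−β} ⊆ n_T⁻ ≅ n_T*`. -/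
def cascadeSub (K : Finset (SR → ℤ)) (T : Finset SR) : Submodule ℂ L :=
  ⨆ β ∈ (td.cascadeK K T : Set (SR → ℤ)), td.rs (-β)

/-- `v = Σ_{β ∈ K(n_T)} e_{−β}` with all `e_{−β} ∈ g_{−β}` nonzero is a cascade point
of `n_T⁻ ≅ n_T*`. -/
def IsCascadePoint (K : Finset (SR → ℤ)) (T : Finset SR) (v : L) : Prop :=
  ∃ e : (SR → ℤ) → L,
    (∀ β ∈ td.cascadeK K T, e β ∈ td.rs (-β) ∧ e β ≠ 0) ∧ v = ∑ β ∈ td.cascadeK K T, e β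

/-- `ind n_T`, computed in the model `n_T* ≅ n_T⁻`. -/
def nilIndex (T : Finset SR) : ℕ :=
  ⨅ v : ↥(td.negNilSub T), Module.finrank ℂ (killStab (v : L) (td.nilrad T) (td.nilrad T))

/-- `v ∈ n_T⁻ ≅ n_T*` is a regular point. -/
def IsRegPoint (T : Finset SR) (v : L) : Prop :=
  v ∈ td.negNilSub T ∧
    Module.finrank ℂ (killStab v (td.nilrad T) (td.nilrad T)) = td.nilIndex T

/-- The Frobenius semiradical `F(n_T) = Σ_{v regular} n_T^v`. -/
def frobNil (T : Finset SR) : Submodule ℂ L :=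
  ⨆ v : {v : L // td.IsRegPoint T v}, killStab (v : L) (td.nilrad T) (td.nilrad T)

/-- `v ∈ n_T⁻ ≅ n_T*` is a generic point for the coadjoint-type action on `n_T*` of the
unipotent group `exp(q)` (where `n_T ⊆ q ⊆ b`): there is a Zariski-dense open subset `Ω`
containing `v` on which all stabilisers (inside `q`) are conjugate under the group
`exp(q) = {exp(ad x) : x ∈ q}` to the stabiliser of `v`.  The stabiliser of such a point is
called a generic stabiliser. -/
def IsGenericStabPoint (T : Finset SR) (q : LieSubalgebra ℂ L) (v : L) : Prop :=
  ∃ Ω : Set ↥(td.negNilSub T), zOpen Ω ∧ zDense Ω ∧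
    (∃ hv : v ∈ td.negNilSub T, (⟨v, hv⟩ : ↥(td.negNilSub T)) ∈ Ω) ∧
    ∀ w ∈ Ω, ∃ x ∈ q,
      (killStab v (td.nilrad T) q).map (nilExp (LieAlgebra.ad ℂ L x)) =
        killStab (w : L) (td.nilrad T) q

/-- The saturation `exp(q)·E ⊆ n_T⁻ ≅ n_T*` of the cascade subspace `E` under the group
`exp(q)`: the coadjoint action is `exp(ad x)` followed by the projection to `n_T⁻`
along `p_T`. -/
def satSet (K : Finset (SR → ℤ)) (T : Finset SR) (q : LieSubalgebra ℂ L) :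
    Set ↥(td.negNilSub T) :=
  {w | ∃ x ∈ q, ∃ u ∈ td.cascadeSub K T,
    nilExp (LieAlgebra.ad ℂ L x) u - (w : L) ∈ td.parabSub T}

/-- The coadjoint action of `exp x` on `n_T* ≅ n_T⁻`: apply `exp(ad x)` and project
back to `n_T⁻` along `p_T`. -/
def coactOn (T : Finset SR) (x : L) (w : ↥(td.negNilSub T)) : ↥(td.negNilSub T) :=
  ⟨td.proj (td.negSet T) (nilExp (LieAlgebra.ad ℂ L x) (w : L)), td.proj_mem _ _⟩

/-- The algebra `S(n_T) = ℂ[n_T*]` of polynomial functions on `n_T* ≅ n_T⁻`. -/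
def polyAlg (T : Finset SR) : Subalgebra ℂ (↥(td.negNilSub T) → ℂ) :=
  Algebra.adjoin ℂ
    (Set.range fun l : Module.Dual ℂ ↥(td.negNilSub T) => (l : ↥(td.negNilSub T) → ℂ))

def invAlg (T : Finset SR) (q : LieSubalgebra ℂ L) : Subalgebra ℂ ↥(td.polyAlg T) where
  carrier := {F | ∀ x ∈ q, ∀ w, (F : ↥(td.negNilSub T) → ℂ) (td.coactOn T x w)
    = (F : ↥(td.negNilSub T) → ℂ) w}
  mul_mem' := by
    intro F G hF hG x hx w
    simp only [Set.mem_setOf_eq] at hF hG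
    simp only [MulMemClass.coe_mul, Pi.mul_apply, hF x hx w, hG x hx w]
  add_mem' := by
    intro F G hF hG x hx w
    simp only [Set.mem_setOf_eq] at hF hG
    simp only [AddMemClass.coe_add, Pi.add_apply, hF x hx w, hG x hx w]
  algebraMap_mem' := by
    intro c x hx w
    rfl

/-- For nested nilradicals `n_Ts ⊆ n_Tb`, the algebra of `exp(q)`-invariants in
`S(n_Ts) ⊆ S(n_Tb)`, realised inside the functions on `n_Tb⁻ ≅ n_Tb*`:
`S(n_Ts)` is generated by the linear functionals factoring through the projection onto
`n_Ts⁻`. -/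
def relInv (Tb Ts : Finset SR) (q : LieSubalgebra ℂ L) :
    Subalgebra ℂ (↥(td.negNilSub Tb) → ℂ) where
  carrier := {F | F ∈ Algebra.adjoin ℂ
      {f : ↥(td.negNilSub Tb) → ℂ |
        ∃ l : Module.Dual ℂ L, f = fun w : ↥(td.negNilSub Tb) => l (td.proj (td.negSet Ts) (w : L))} ∧
      ∀ x ∈ q, ∀ w, F (td.coactOn Tb x w) = F w}
  mul_mem' := by
    rintro F G ⟨hF1, hF2⟩ ⟨hG1, hG2⟩
    refine ⟨mul_mem hF1 hG1, fun x hx w => ?_⟩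
    simp only [Pi.mul_apply, hF2 x hx w, hG2 x hx w]
  add_mem' := by
    rintro F G ⟨hF1, hF2⟩ ⟨hG1, hG2⟩
    refine ⟨add_mem hF1 hG1, fun x hx w => ?_⟩
    simp only [Pi.add_apply, hF2 x hx w, hG2 x hx w]
  algebraMap_mem' := by
    intro c
    exact ⟨Subalgebra.algebraMap_mem _ c, fun x hx w => rfl⟩

end TriangularData

/-- The transcendence degree of a commutative `ℂ`-algebra. -/
def trdegC (A : Type*) [CommRing A] [Algebra ℂ A] : Cardinal :=
  ⨆ s : {s : Set A // AlgebraicIndependent ℂ ((↑) : s → A)}, Cardinal.mk s.1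


/-- The root `ε_i − ε_j` (`i < j`) of `sp_{2m}` in simple-root coordinates
(`0`-based indexing, `α_{m-1} = 2ε_m` the long simple root). -/
def epsSub {m : ℕ} (i j : Fin m) : Fin m → ℤ :=
  fun a => (if i ≤ a then 1 else 0) - (if j ≤ a then 1 else 0)

/-- The root `ε_i + ε_j` (`i ≤ j`) of `sp_{2m}` in simple-root coordinates. -/
def epsAdd {m : ℕ} (i j : Fin m) : Fin m → ℤ :=
  fun a => if (a : ℕ) = m - 1 then 1 else (if i ≤ a then 1 else 0) + (if j ≤ a then 1 else 0)

namespace SpAux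

/-! #### matrices -/

def strictB {k : ℕ} (b : Fin k → ℕ) : Submodule ℂ (Matrix (Fin k) (Fin k) ℂ) where
  carrier := {X | ∀ i j, b j ≤ b i → X i j = 0}
  add_mem' := by
    intro X Y hX hY i j h
    simp [hX i j h, hY i j h]
  zero_mem' := by intro i j _; rfl
  smul_mem' := by
    intro c X hX i j h
    simp [hX i j h]

def goodM {k : ℕ} (S : Matrix (Fin k) (Fin k) ℂ) : Prop :=
  ∀ s : Finset (Fin k), (S.submatrix (fun i : s => (i : Fin k)) (fun i : s => (i : Fin k))).det ≠ 0

lemma blockT_mul_strictB {k : ℕ} {b : Fin k → ℕ} {D X : Matrix (Fin k) (Fin k) ℂ}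
    (hD : D.BlockTriangular b) (hX : X ∈ strictB b) : D * X ∈ strictB b := by
  intro i j h
  rw [Matrix.mul_apply]
  refine Finset.sum_eq_zero fun l _ => ?_
  by_cases h1 : b l < b i
  · rw [hD h1, zero_mul]
  · rw [hX l j (by omega), mul_zero]

lemma strictB_blockT {k : ℕ} {b : Fin k → ℕ} {X : Matrix (Fin k) (Fin k) ℂ}
    (hX : X ∈ strictB b) : X.BlockTriangular b := fun i j h => hX i j h.le

lemma strictB_pow {k : ℕ} {b : Fin k → ℕ} {X : Matrix (Fin k) (Fin k) ℂ}
    (hX : X ∈ strictB b) (n : ℕ) : ∀ i j, b j < b i + n → (X ^ n) i j = 0 := by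
  induction n with
  | zero =>
    intro i j h
    rw [pow_zero, Matrix.one_apply_ne]
    rintro rfl; omega
  | succ n ih =>
    intro i j h
    rw [pow_succ, Matrix.mul_apply]
    refine Finset.sum_eq_zero fun l _ => ?_
    by_cases h1 : b l < b i + n
    · rw [ih i l h1, zero_mul]
    · rw [hX l j (by omega), mul_zero]

lemma strictB_nilp {k : ℕ} {b : Fin k → ℕ} {X : Matrix (Fin k) (Fin k) ℂ}
    (hX : X ∈ strictB b) : IsNilpotent X := by
  refine ⟨(∑ i, b i) + 1, ?_⟩
  ext i j
  refine strictB_pow hX _ i j ?_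
  have := Finset.single_le_sum (f := b) (fun i _ => Nat.zero_le _) (Finset.mem_univ j)
  omega

/-- logarithm of a unipotent element, in a commutative ring. -/
lemma exists_log {A : Type*} [CommRing A] [Module ℚ A] (N : A) (hN : IsNilpotent N) :
    ∃ q : A, IsNilpotent.exp (N * q) = 1 + N := by
  have hn : ∀ q, IsNilpotent (N * q) := fun q => (Commute.all N q).isNilpotent_mul_right hN
  have key : ∀ d : A, ∃ r, IsNilpotent.exp (N * d) = 1 + N * d + (N * d) * (N * d) * r := by
    intro d
    obtain ⟨n, h⟩ := hn d
    have h2 : (N * d) ^ (n + 2) = 0 := pow_eq_zero_of_le (by omega) h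
    rw [IsNilpotent.exp_eq_sum h2, Finset.sum_range_succ', Finset.sum_range_succ']
    refine ⟨∑ i ∈ Finset.range n, ((i + 1 + 1).factorial : ℚ)⁻¹ • (N * d) ^ i, ?_⟩
    rw [Finset.mul_sum]
    simp only [zero_add, Nat.factorial_one, Nat.cast_one, inv_one, pow_one, one_smul,
      Nat.factorial_zero, pow_zero]
    have : ∀ i, ((i + 1 + 1).factorial : ℚ)⁻¹ • (N * d) ^ (i + 1 + 1)
      = (N * d) * (N * d) * (((i + 1 + 1).factorial : ℚ)⁻¹ • (N * d) ^ i) := by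
      intro i
      rw [mul_smul_comm]; congr 1; ring
    simp only [this]
    ring
  have step : ∀ k : ℕ, ∃ q r, IsNilpotent.exp (N * q) = 1 + N + N ^ (k + 1) * r := by
    intro k
    induction k with
    | zero => exact ⟨0, -1, by rw [mul_zero, IsNilpotent.exp_zero]; ring⟩
    | succ k ih =>
      obtain ⟨q, r, h⟩ := ih
      obtain ⟨s, hs⟩ := key (- (N ^ k * r))
      refine ⟨q + - (N ^ k * r), -r - N ^ k * r * r + N ^ k * r * r * s * (1 + N + N ^ (k+1) * r), ?_⟩
      rw [mul_add, IsNilpotent.exp_add_of_commute (Commute.all _ _) (hn _) (hn _), h, hs]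
      ring
  obtain ⟨n, h⟩ := hN
  obtain ⟨q, r, hq⟩ := step n
  exact ⟨q, by rw [hq, pow_succ, h]; ring⟩

lemma exists_log_strictB {k : ℕ} {b : Fin k → ℕ} {N : Matrix (Fin k) (Fin k) ℂ}
    (hN : N ∈ strictB b) : ∃ X ∈ strictB b, IsNilpotent.exp X = 1 + N := by
  obtain ⟨n, hn⟩ := strictB_nilp hN
  let I : Ideal (Polynomial ℂ) := Ideal.span {Polynomial.X ^ n}
  let φ : (Polynomial ℂ) →+* Matrix (Fin k) (Fin k) ℂ := (Polynomial.aeval N).toRingHom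
  have hI : ∀ a ∈ I, φ a = 0 := by
    intro a ha
    obtain ⟨c, rfl⟩ := Ideal.mem_span_singleton'.1 ha
    simp [φ, hn]
  let f : (Polynomial ℂ ⧸ I) →+* Matrix (Fin k) (Fin k) ℂ := Ideal.Quotient.lift I φ hI
  let x : Polynomial ℂ ⧸ I := Ideal.Quotient.mk I Polynomial.X
  have hx : IsNilpotent x := by
    refine ⟨n, ?_⟩
    rw [← map_pow]
    exact Ideal.Quotient.eq_zero_iff_mem.2 (Ideal.subset_span rfl)
  have hfx : f x = N := by simp [f, x, φ]
  have hbt : ∀ p : Polynomial ℂ, (Polynomial.aeval N p).BlockTriangular b := by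
    intro p
    induction p using Polynomial.induction_on' with
    | add p q hp hq =>
      rw [map_add]
      exact hp.add hq
    | monomial i a =>
      rw [Polynomial.aeval_monomial]
      intro i' j' h
      rw [Matrix.algebraMap_eq_diagonal, Matrix.diagonal_mul,
        strictB_pow hN i i' j' (by omega), mul_zero]
  obtain ⟨q, hq⟩ := exists_log x hx
  refine ⟨f (x * q), ?_, ?_⟩
  · obtain ⟨p, rfl⟩ := Ideal.Quotient.mk_surjective q
    have : f (x * Ideal.Quotient.mk I p) = Polynomial.aeval N p * N := by
      rw [mul_comm, map_mul, hfx]; simp [f, φ]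
    rw [this]
    exact blockT_mul_strictB (hbt p) hN
  · rw [← IsNilpotent.map_exp ((Commute.all x q).isNilpotent_mul_right hx) f, hq, map_add, hfx,
      map_one]

lemma exists_ldl {k : ℕ} (b : Fin k → ℕ) {S : Matrix (Fin k) (Fin k) ℂ}
    (hS : S.transpose = S) (hg : goodM S) :
    ∃ N ∈ strictB b, Matrix.BlockTriangular ((1 + N).transpose * S * (1 + N)) b := by
  have h1 : ∀ j, ∃ c : Fin k → ℂ, (∀ i, b j ≤ b i → c i = 0) ∧
      ∀ i, b i < b j → S i j + ∑ l, S i l * c l = 0 := by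
    intro j
    let s : Finset (Fin k) := Finset.univ.filter fun i => b i < b j
    let M := S.submatrix (fun i : s => (i : Fin k)) (fun i : s => (i : Fin k))
    have hM : IsUnit M.det := isUnit_iff_ne_zero.2 (hg s)
    let v : s → ℂ := M⁻¹.mulVec (fun i => - S i j)
    have hv : M.mulVec v = fun i : s => - S i j := by
      rw [Matrix.mulVec_mulVec, Matrix.mul_nonsing_inv _ hM, Matrix.one_mulVec]
    refine ⟨fun i => if h : i ∈ s then v ⟨i, h⟩ else 0, ?_, ?_⟩
    · intro i hi
      exact dif_neg (by simp [s, hi])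
    · intro i hi
      have := congrFun hv ⟨i, by simp [s, hi]⟩
      have h2 : ∑ l, S i l * (if h : l ∈ s then v ⟨l, h⟩ else 0) = ∑ l : s, S i l * v l := by
        rw [← Finset.sum_subset (Finset.subset_univ s), ← Finset.sum_coe_sort]
        · refine Finset.sum_congr rfl fun l _ => ?_
          rw [dif_pos l.2]
        · intro l _ hl
          rw [dif_neg hl, mul_zero]
      rw [h2]
      have h3 : ∑ l : s, S i l * v l = - S i j := this
      rw [h3]; ring
  choose c hc1 hc2 using h1
  let N : Matrix (Fin k) (Fin k) ℂ := fun i j => c j i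
  have hN : N ∈ strictB b := fun i j h => hc1 j i h
  refine ⟨N, hN, ?_⟩
  have hSV : ∀ i j, b i < b j → (S * (1 + N)) i j = 0 := by
    intro i j h
    rw [Matrix.mul_add, Matrix.mul_one, Matrix.add_apply, Matrix.mul_apply]
    exact hc2 j i h
  have hlow : ∀ i j, b i < b j → ((1 + N).transpose * S * (1 + N)) i j = 0 := by
    intro i j h
    rw [Matrix.mul_assoc, Matrix.mul_apply]
    refine Finset.sum_eq_zero fun l _ => ?_
    by_cases h2 : b l < b j
    · rw [hSV l j h2, mul_zero]
    · have : (1 + N) l i = 0 := by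
        rw [Matrix.add_apply, hN l i (by omega), Matrix.one_apply_ne, add_zero]
        rintro rfl; omega
      rw [Matrix.transpose_apply, this, zero_mul]
  intro i j h
  have hsym : ((1 + N).transpose * S * (1 + N)).transpose = (1 + N).transpose * S * (1 + N) := by
    rw [Matrix.transpose_mul, Matrix.transpose_mul, Matrix.transpose_transpose, hS,
      Matrix.mul_assoc]
  rw [← hsym, Matrix.transpose_apply]
  exact hlow j i h

lemma exists_block {k : ℕ} (b : Fin k → ℕ) {S : Matrix (Fin k) (Fin k) ℂ}
    (hS : S.transpose = S) (hg : goodM S) :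
    ∃ X ∈ strictB b, ∃ D : Matrix (Fin k) (Fin k) ℂ, D.transpose = D ∧ D.BlockTriangular b ∧
      IsUnit D.det ∧ 
      S = (IsNilpotent.exp (-X)).transpose * D * IsNilpotent.exp (-X) := by
  obtain ⟨N, hN, hD⟩ := exists_ldl b hS hg
  obtain ⟨X, hX, hXN⟩ := exists_log_strictB hN
  have hnil := strictB_nilp hX
  have e1 : (1 + N) * IsNilpotent.exp (-X) = 1 := by
    rw [← hXN]; exact IsNilpotent.exp_mul_exp_neg_self hnil
  have e2 : (IsNilpotent.exp (-X)).transpose * (1 + N).transpose = 1 := by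
    rw [← Matrix.transpose_mul, e1, Matrix.transpose_one]
  have hSd : IsUnit S.det := by
    have h := hg Finset.univ
    have h3 : (S.submatrix (fun i : (Finset.univ : Finset (Fin k)) => (i : Fin k))
      (fun i : (Finset.univ : Finset (Fin k)) => (i : Fin k))).det = S.det :=
      Matrix.det_submatrix_equiv_self (Equiv.subtypeUnivEquiv (by simp)) S
    rw [h3] at h
    exact isUnit_iff_ne_zero.2 h
  have hV : IsUnit (1 + N).det := by
    have := congrArg Matrix.det e1
    rw [Matrix.det_mul, Matrix.det_one] at this
    exact IsUnit.of_mul_eq_one _ this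
  refine ⟨X, hX, _, ?_, hD, ?_, ?_⟩
  · rw [Matrix.transpose_mul, Matrix.transpose_mul, Matrix.transpose_transpose, hS,
      Matrix.mul_assoc]
  · rw [Matrix.det_mul, Matrix.det_mul, Matrix.det_transpose]
    exact (hV.mul hSd).mul hV
  · calc S = 1 * S * 1 := by rw [Matrix.one_mul, Matrix.mul_one]
      _ = ((IsNilpotent.exp (-X)).transpose * (1 + N).transpose) * S *
          ((1 + N) * IsNilpotent.exp (-X)) := by rw [e1, e2]
      _ = _ := by simp only [Matrix.mul_assoc]

/-- the infinitesimal action on (symmetric) matrices. -/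
def rho {k : ℕ} (X : Matrix (Fin k) (Fin k) ℂ) : Module.End ℂ (Matrix (Fin k) (Fin k) ℂ) :=
  LinearMap.mulLeft ℂ (-X).transpose + LinearMap.mulRight ℂ (-X)

lemma rho_apply {k : ℕ} (X S : Matrix (Fin k) (Fin k) ℂ) :
    rho X S = - (X.transpose * S + S * X) := by
  simp [rho]; abel

lemma rho_nilp {k : ℕ} {X : Matrix (Fin k) (Fin k) ℂ} (hX : IsNilpotent X) :
    IsNilpotent (rho X) := by
  refine Commute.isNilpotent_add (LinearMap.commute_mulLeft_right _ _) ?_ ?_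
  · rw [LinearMap.isNilpotent_mulLeft_iff]
    obtain ⟨n, h⟩ := hX.neg
    exact ⟨n, by rw [← Matrix.transpose_pow, h, Matrix.transpose_zero]⟩
  · rw [LinearMap.isNilpotent_mulRight_iff]
    exact hX.neg

lemma exp_rho {k : ℕ} {X : Matrix (Fin k) (Fin k) ℂ} (hX : IsNilpotent X)
    (S : Matrix (Fin k) (Fin k) ℂ) :
    IsNilpotent.exp (rho X) S =
      (IsNilpotent.exp (-X)).transpose * S * IsNilpotent.exp (-X) := by
  obtain ⟨n, h⟩ := hX.neg
  have ht : (-X).transpose ^ n = 0 := by rw [← Matrix.transpose_pow, h, Matrix.transpose_zero]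
  have hl : (LinearMap.mulLeft ℂ (-X).transpose) ^ n = 0 := by
    rw [LinearMap.pow_mulLeft, ht, LinearMap.mulLeft_zero_eq_zero]
  have hr : (LinearMap.mulRight ℂ (-X)) ^ n = 0 := by
    rw [LinearMap.pow_mulRight, h, LinearMap.mulRight_zero_eq_zero]
  rw [rho, IsNilpotent.exp_add_of_commute (LinearMap.commute_mulLeft_right _ _) ⟨n, hl⟩ ⟨n, hr⟩,
    IsNilpotent.exp_eq_sum hl, IsNilpotent.exp_eq_sum hr, IsNilpotent.exp_eq_sum h]
  simp only [LinearMap.pow_mulLeft, LinearMap.pow_mulRight, Module.End.mul_apply,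
    LinearMap.sum_apply, LinearMap.smul_apply, LinearMap.mulLeft_apply, LinearMap.mulRight_apply,
    Matrix.transpose_sum, Matrix.transpose_smul, Matrix.transpose_pow, Finset.sum_mul,
    Finset.mul_sum, smul_mul_assoc, mul_smul_comm, Matrix.mul_assoc]

end SpAux

namespace SpAux

/-! #### the abstract root grading of type C -/

/-- roots of type `C` in `ε`-coordinates -/
def IsRt {m : ℕ} (c : Fin m → ℤ) : Prop :=
  c ≠ 0 ∧ ∃ i j : Fin m, ∃ s s' : ℤ, (s = 1 ∨ s = -1) ∧ (s' = 1 ∨ s' = -1) ∧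
    c = Pi.single i s + Pi.single j s'

structure CGrad (L : Type*) [LieRing L] [LieAlgebra ℂ L] (m : ℕ) where
  g : (Fin m → ℤ) → Submodule ℂ L
  pr : (Fin m → ℤ) → (L →ₗ[ℂ] L)
  B : Finset (Fin m → ℤ)
  bracket : ∀ {c d : Fin m → ℤ} {x y : L}, x ∈ g c → y ∈ g d → ⁅x, y⁆ ∈ g (c + d)
  pr_mem : ∀ c x, pr c x ∈ g c
  pr_same : ∀ {c x}, x ∈ g c → pr c x = x
  pr_ne : ∀ {c d x}, x ∈ g c → c ≠ d → pr d x = 0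
  pr_sum : ∀ x, ∑ c ∈ B, pr c x = x
  off : ∀ c, c ≠ 0 → ¬ IsRt c → g c = ⊥
  dim : ∀ c, IsRt c → Module.finrank ℂ (g c) = 1

namespace CGrad
variable {L : Type*} [LieRing L] [LieAlgebra ℂ L] {m : ℕ} (G : CGrad L m)

lemma eq_zero_of_not {c : Fin m → ℤ} {x : L} (hx : x ∈ G.g c) (h0 : c ≠ 0) (h : ¬ IsRt c) :
    x = 0 := by
  rw [G.off c h0 h] at hx; simpa using hx

lemma pr_pr (c : Fin m → ℤ) (x : L) : G.pr c (G.pr c x) = G.pr c x := G.pr_same (G.pr_mem c x)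

lemma ext_pr {x : L} (h : ∀ c, G.pr c x = 0) : x = 0 := by
  rw [← G.pr_sum x]
  exact Finset.sum_eq_zero fun c _ => h c

def GS (S : Set (Fin m → ℤ)) : Submodule ℂ L where
  carrier := {x | ∀ c, c ∉ S → G.pr c x = 0}
  add_mem' := by
    intro x y hx hy c hc
    rw [map_add, hx c hc, hy c hc, add_zero]
  zero_mem' := by intro c _; rw [map_zero]
  smul_mem' := by
    intro a x hx c hc
    rw [map_smul, hx c hc, smul_zero]

lemma mem_GS {S : Set (Fin m → ℤ)} {x : L} : x ∈ G.GS S ↔ ∀ c, c ∉ S → G.pr c x = 0 := Iff.rfl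

lemma GS_of_mem {S : Set (Fin m → ℤ)} {c : Fin m → ℤ} {x : L} (hx : x ∈ G.g c) (hc : c ∈ S) :
    x ∈ G.GS S := by
  intro d hd
  exact G.pr_ne hx (by rintro rfl; exact hd hc)

lemma pr_mem_GS {S : Set (Fin m → ℤ)} {x : L} (hx : x ∈ G.GS S) (c : Fin m → ℤ) :
    G.pr c x ∈ G.GS S := by
  by_cases h : c ∈ S
  · exact G.GS_of_mem (G.pr_mem c x) h
  · rw [hx c h]; exact zero_mem _

lemma GS_mono {S S' : Set (Fin m → ℤ)} (h : S ⊆ S') : G.GS S ≤ G.GS S' :=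
  fun _ hx c hc => hx c fun h' => hc (h h')

lemma GS_le {S : Set (Fin m → ℤ)} {p : Submodule ℂ L} 
    (h : ∀ c ∈ S, ∀ x ∈ G.g c, x ∈ p) : G.GS S ≤ p := by
  intro x hx
  rw [← G.pr_sum x]
  refine sum_mem fun c _ => ?_
  by_cases hc : c ∈ S
  · exact h c hc _ (G.pr_mem c x)
  · rw [hx c hc]; exact zero_mem _

lemma GS_bracket {S S' S'' : Set (Fin m → ℤ)} 
    (h : ∀ c ∈ S, ∀ d ∈ S', (c + d = 0 ∨ IsRt (c + d)) → c + d ∈ S'') {x y : L}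
    (hx : x ∈ G.GS S) (hy : y ∈ G.GS S') : ⁅x, y⁆ ∈ G.GS S'' := by
  rw [← G.pr_sum x, ← G.pr_sum y, sum_lie]
  refine sum_mem fun c _ => ?_
  rw [lie_sum]
  refine sum_mem fun d _ => ?_
  by_cases hc : c ∈ S
  · by_cases hd : d ∈ S'
    · have hm := G.bracket (G.pr_mem c x) (G.pr_mem d y)
      by_cases hr : c + d = 0 ∨ IsRt (c + d)
      · exact G.GS_of_mem hm (h c hc d hd hr)
      · push Not at hr
        rw [G.eq_zero_of_not hm hr.1 hr.2]; exact zero_mem _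
    · rw [hy d hd, lie_zero]; exact zero_mem _
  · rw [hx c hc, zero_lie]; exact zero_mem _

lemma pr_lie {c d : Fin m → ℤ} {x : L} (hx : x ∈ G.g c) (y : L) :
    G.pr (c + d) ⁅x, y⁆ = ⁅x, G.pr d y⁆ := by
  have hd : G.pr (c + d) ⁅x, y⁆ = ∑ e ∈ G.B, G.pr (c + d) ⁅x, G.pr e y⁆ := by
    conv_lhs => rw [← G.pr_sum y, lie_sum, map_sum]
  have hd' : ⁅x, G.pr d y⁆ = ∑ e ∈ G.B, ⁅x, G.pr d (G.pr e y)⁆ := by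
    conv_lhs => rw [← G.pr_sum y, map_sum, lie_sum]
  rw [hd, hd']
  refine Finset.sum_congr rfl fun e _ => ?_
  by_cases he : e = d
  · subst he
    rw [G.pr_pr, G.pr_same (G.bracket hx (G.pr_mem e y))]
  · rw [G.pr_ne (G.pr_mem e y) he, lie_zero]
    exact G.pr_ne (G.bracket hx (G.pr_mem e y)) (by simpa using he)

lemma exists_ne {c : Fin m → ℤ} (h : IsRt c) : ∃ x ∈ G.g c, x ≠ 0 := by
  have := G.dim c h
  obtain ⟨v, hv, _⟩ := finrank_eq_one_iff'.1 this
  exact ⟨v, v.2, fun h => hv (Subtype.ext h)⟩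

lemma exists_smul {c : Fin m → ℤ} (h : IsRt c) {x y : L} (hx : x ∈ G.g c) (hx0 : x ≠ 0)
    (hy : y ∈ G.g c) : ∃ a : ℂ, y = a • x := by
  have hn : (⟨x, hx⟩ : G.g c) ≠ 0 := fun h => hx0 (congrArg Subtype.val h)
  obtain ⟨a, ha⟩ := (finrank_eq_one_iff_of_nonzero' _ hn).1 (G.dim c h) ⟨y, hy⟩
  exact ⟨a, (congrArg Subtype.val ha).symm⟩

variable [FiniteDimensional ℂ L]

lemma kill_orth {c d : Fin m → ℤ} (h : c + d ≠ 0) {x y : L} (hx : x ∈ G.g c) (hy : y ∈ G.g d) :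
    killingForm ℂ L x y = 0 := by
  rw [killingForm_apply_apply]
  set f : Module.End ℂ L := ad ℂ L x ∘ₗ ad ℂ L y with hf
  have h1 : f = ∑ e ∈ G.B, f ∘ₗ G.pr e := by
    ext z
    rw [LinearMap.sum_apply]
    simp only [LinearMap.comp_apply]
    rw [← map_sum, G.pr_sum]
  rw [h1, map_sum]
  refine Finset.sum_eq_zero fun e _ => ?_
  have h2 : f ∘ₗ G.pr e = (f ∘ₗ G.pr e) ∘ₗ G.pr e := by
    ext z; simp [G.pr_pr]
  rw [h2, LinearMap.trace_comp_comm']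
  suffices h4 : G.pr e ∘ₗ (f ∘ₗ G.pr e) = 0 by rw [h4, map_zero]
  ext z
  simp only [LinearMap.comp_apply, hf, ad_apply, LinearMap.zero_apply]
  refine G.pr_ne (G.bracket hx (G.bracket hy (G.pr_mem e z))) ?_
  intro h3
  apply h
  have : (c + d) + e = 0 + e := by rw [← h3]; simp [add_assoc, h3]
  exact add_right_cancel this

lemma kill_GS {S S' : Set (Fin m → ℤ)} (h : ∀ c ∈ S, ∀ d ∈ S', c + d ≠ 0) {x y : L}
    (hx : x ∈ G.GS S) (hy : y ∈ G.GS S') : killingForm ℂ L x y = 0 := by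
  rw [← G.pr_sum x, ← G.pr_sum y, map_sum]
  refine Finset.sum_eq_zero fun d _ => ?_
  rw [map_sum, LinearMap.sum_apply]
  refine Finset.sum_eq_zero fun c _ => ?_
  by_cases hc : c ∈ S
  · by_cases hd : d ∈ S'
    · exact G.kill_orth (h c hc d hd) (G.pr_mem c x) (G.pr_mem d y)
    · rw [hy d hd, map_zero]
  · rw [hx c hc, map_zero, LinearMap.zero_apply]

end CGrad
end SpAux

namespace SpAux

lemma rt_bound3 {m : ℕ} {c : Fin m → ℤ} (h : c = 0 ∨ IsRt c) {i j l : Fin m} (hij : i ≠ j)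
    (hil : i ≠ l) (hjl : j ≠ l) : (c i).natAbs + (c j).natAbs + (c l).natAbs ≤ 2 := by
  rcases h with rfl | ⟨_, a, b, s, s', hs, hs', rfl⟩
  · simp
  · simp only [Pi.add_apply, Pi.single_apply]
    split_ifs <;> omega

lemma rt_bound2 {m : ℕ} {c : Fin m → ℤ} (h : c = 0 ∨ IsRt c) {i j : Fin m} (hij : i ≠ j) :
    (c i).natAbs + (c j).natAbs ≤ 2 := by
  rcases h with rfl | ⟨_, a, b, s, s', hs, hs', rfl⟩
  · simp
  · simp only [Pi.add_apply, Pi.single_apply]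
    split_ifs <;> omega

lemma rt_bound1 {m : ℕ} {c : Fin m → ℤ} (h : c = 0 ∨ IsRt c) (i : Fin m) :
    (c i).natAbs ≤ 2 := by
  rcases h with rfl | ⟨_, a, b, s, s', hs, hs', rfl⟩
  · simp
  · simp only [Pi.add_apply, Pi.single_apply]
    split_ifs <;> omega

lemma rt_pair {m : ℕ} {i j : Fin m} (hij : i ≠ j) {s t : ℤ} (hs : s = 1 ∨ s = -1)
    (ht : t = 1 ∨ t = -1) : IsRt (Pi.single i s + Pi.single j t : Fin m → ℤ) := by
  refine ⟨fun h => ?_, i, j, s, t, hs, ht, rfl⟩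
  have := congrFun h i
  simp [hij] at this
  omega

lemma rt_long {m : ℕ} (i : Fin m) {s : ℤ} (hs : s = 1 ∨ s = -1) :
    IsRt (Pi.single i (2 * s) : Fin m → ℤ) := by
  refine ⟨fun h => ?_, i, i, s, s, hs, hs, ?_⟩
  · have := congrFun h i
    simp at this
    omega
  · rw [← Pi.single_add, two_mul]

namespace CGrad
variable {L : Type*} [LieRing L] [LieAlgebra ℂ L] {m : ℕ} (G : CGrad L m)

lemma exists_split (d : (Fin m → ℤ) → ℤ) (z : L) :
    ∃ a b, a ∈ G.GS {c | 0 < d c} ∧ b ∈ G.GS {c | d c ≤ 0} ∧ z = a + b := by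
  refine ⟨∑ c ∈ G.B.filter (fun c => 0 < d c), G.pr c z,
    ∑ c ∈ G.B.filter (fun c => ¬ 0 < d c), G.pr c z, ?_, ?_, ?_⟩
  · refine sum_mem fun c hc => G.GS_of_mem (G.pr_mem c z) (Finset.mem_filter.1 hc).2
  · refine sum_mem fun c hc => G.GS_of_mem (G.pr_mem c z) (not_lt.1 (Finset.mem_filter.1 hc).2)
  · rw [Finset.sum_filter_add_sum_filter_not, G.pr_sum]

lemma principleP [LieAlgebra.IsSimple ℂ L] (d : (Fin m → ℤ) →+ ℤ) {δ : Fin m → ℤ} {x : L}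
    (hx : x ∈ G.g δ) (hx0 : x ≠ 0) (h : ∀ γ, 0 < d γ → ∀ z ∈ G.g γ, ⁅z, x⁆ = 0)
    (γ : Fin m → ℤ) (hγ : d δ < d γ) : G.g γ = ⊥ := by
  set N : Set (Fin m → ℤ) := {c | d c ≤ 0}
  let K : Set (Submodule ℂ L) := {p | x ∈ p ∧ ∀ z ∈ G.GS N, ∀ y ∈ p, ⁅z, y⁆ ∈ p}
  let I : Submodule ℂ L := sInf K
  have hIK : I ∈ K := by
    refine ⟨Submodule.mem_sInf.2 fun p hp => hp.1, fun z hz y hy => ?_⟩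
    exact Submodule.mem_sInf.2 fun p hp => hp.2 z hz y (Submodule.mem_sInf.1 hy p hp)
  have hmin : ∀ p ∈ K, I ≤ p := fun p hp => sInf_le hp
  let Q : Submodule ℂ L :=
    { carrier := {y | y ∈ I ∧ ∀ z : L, ⁅z, y⁆ ∈ I}
      add_mem' := by
        rintro a b ⟨ha, ha'⟩ ⟨hb, hb'⟩
        exact ⟨add_mem ha hb, fun z => by rw [lie_add]; exact add_mem (ha' z) (hb' z)⟩
      zero_mem' := ⟨zero_mem _, fun z => by rw [lie_zero]; exact zero_mem _⟩
      smul_mem' := by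
        rintro c a ⟨ha, ha'⟩
        exact ⟨I.smul_mem c ha, fun z => by rw [lie_smul]; exact I.smul_mem c (ha' z)⟩ }
  have hpos : ∀ a ∈ G.GS {c | 0 < d c}, ⁅a, x⁆ = 0 := by
    intro a ha
    have h1 : G.GS {c | 0 < d c} ≤ LinearMap.ker (ad ℂ L x) := by
      apply G.GS_le
      intro c hc z hz
      rw [LinearMap.mem_ker, ad_apply, ← lie_skew, h c hc z hz, neg_zero]
    have h2 := h1 ha
    rw [LinearMap.mem_ker, ad_apply] at h2
    rw [← lie_skew, h2, neg_zero]
  have hQ : Q ∈ K := by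
    refine ⟨⟨hIK.1, fun z => ?_⟩, fun v hv y hy => ⟨hIK.2 v hv y hy.1, fun z => ?_⟩⟩
    · obtain ⟨a, b, ha, hb, rfl⟩ := G.exists_split d z
      rw [add_lie, hpos a ha, zero_add]
      exact hIK.2 b hb x hIK.1
    · rw [leibniz_lie]
      exact add_mem (hy.2 _) (hIK.2 v hv _ (hy.2 z))
  have hW : G.GS {c | d c ≤ d δ} ∈ K := by
    refine ⟨G.GS_of_mem hx (show d δ ≤ d δ from le_rfl), fun z hz y hy => ?_⟩
    refine G.GS_bracket ?_ hz hy
    intro c hc e he _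
    simp only [N, Set.mem_ofPred_eq, map_add] at *
    omega
  let J : LieIdeal ℂ L := { I with lie_mem := fun {z y} hy => (hmin Q hQ hy).2 z }
  have hJ : J = ⊤ := by
    rcases LieAlgebra.IsSimple.eq_bot_or_eq_top J with hb | ht
    · exfalso
      have : x ∈ J := hIK.1
      rw [hb] at this
      exact hx0 (by simpa using this)
    · exact ht
  rw [eq_bot_iff]
  intro y hy
  have h1 : y ∈ J := by rw [hJ]; trivial
  have h2 : y ∈ G.GS {c | d c ≤ d δ} := hmin _ hW h1
  have h3 := h2 γ (by simpa using hγ)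
  rw [G.pr_same hy] at h3
  simpa using h3

/-- evaluation at a coordinate times a sign -/
def evl (i : Fin m) (s : ℤ) : (Fin m → ℤ) →+ ℤ := (AddMonoidHom.mulLeft s).comp (Pi.evalAddMonoidHom _ i)

lemma evl_apply (i : Fin m) (s : ℤ) (c : Fin m → ℤ) : evl i s c = s * c i := rfl

lemma zr_of_ne {c : Fin m → ℤ} {x : L} (hx : x ∈ G.g c) (h : x ≠ 0) : c = 0 ∨ IsRt c := by
  by_contra hc
  push Not at hc
  exact h (G.eq_zero_of_not hx hc.1 hc.2)

variable [LieAlgebra.IsSimple ℂ L]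

lemma ne_a {i j : Fin m} (hij : i ≠ j) {s t : ℤ} (hs : s = 1 ∨ s = -1) (ht : t = 1 ∨ t = -1)
    {x y : L} (hx : x ∈ G.g (Pi.single i s + Pi.single j t)) (hx0 : x ≠ 0)
    (hy : y ∈ G.g (Pi.single i s + Pi.single j (-t))) (hy0 : y ≠ 0) : ⁅x, y⁆ ≠ 0 := by
  intro h0
  have hb := G.principleP (evl i s) hx hx0 ?_ (Pi.single i (2 * s)) ?_
  · have := G.dim _ (rt_long i hs)
    rw [hb] at this
    simp at this
  · intro γ hγ z hz
    by_contra hne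
    have hz0 : z ≠ 0 := by rintro rfl; simp at hne
    have r1 := G.zr_of_ne hz hz0
    have r2 := G.zr_of_ne (G.bracket hz hx) hne
    have key : γ = Pi.single i s + Pi.single j (-t) := by
      funext l
      rw [evl_apply] at hγ
      have e1 := rt_bound2 r1 hij
      have e2 := rt_bound2 r2 hij
      by_cases hli : l = i
      · subst hli
        simp [hij, hij.symm] at e2 ⊢
        rcases hs with rfl | rfl <;> omega
      · by_cases hlj : l = j
        · subst hlj
          simp [hij, hij.symm] at e2 ⊢
          rcases hs with rfl | rfl <;> omega
        · have e3 := rt_bound3 r2 hij (Ne.symm hli) (Ne.symm hlj)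
          simp [hij, hij.symm, hli, hlj] at e3 ⊢
          rcases hs with rfl | rfl <;> omega
    subst key
    obtain ⟨a, rfl⟩ := G.exists_smul (rt_pair hij hs (by omega)) hy hy0 hz
    apply hne
    rw [smul_lie, ← lie_skew, h0]; simp
  · rw [evl_apply, evl_apply]; simp [hij]
    rcases hs with rfl | rfl <;> norm_num

lemma ne_b {i j : Fin m} (hij : i ≠ j) {s t : ℤ} (hs : s = 1 ∨ s = -1) (ht : t = 1 ∨ t = -1)
    {x y : L} (hx : x ∈ G.g (Pi.single i (2 * s))) (hx0 : x ≠ 0)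
    (hy : y ∈ G.g (Pi.single i (-s) + Pi.single j t)) (hy0 : y ≠ 0) : ⁅x, y⁆ ≠ 0 := by
  intro h0
  have hb := G.principleP (evl j t) hx hx0 ?_ (Pi.single j (2 * t)) ?_
  · have := G.dim _ (rt_long j ht)
    rw [hb] at this
    simp at this
  · intro γ hγ z hz
    by_contra hne
    have hz0 : z ≠ 0 := by rintro rfl; simp at hne
    have r1 := G.zr_of_ne hz hz0
    have r2 := G.zr_of_ne (G.bracket hz hx) hne
    have key : γ = Pi.single i (-s) + Pi.single j t := by
      funext l
      rw [evl_apply] at hγ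
      have e1 := rt_bound2 r1 hij
      have e2 := rt_bound2 r2 hij
      by_cases hli : l = i
      · subst hli
        simp [hij, hij.symm] at e2 ⊢
        rcases hs with rfl | rfl <;> rcases ht with rfl | rfl <;> omega
      · by_cases hlj : l = j
        · subst hlj
          simp [hij, hij.symm] at e2 ⊢
          rcases hs with rfl | rfl <;> rcases ht with rfl | rfl <;> omega
        · have e3 := rt_bound3 r2 hij (Ne.symm hli) (Ne.symm hlj)
          have e4 := rt_bound3 r1 hij (Ne.symm hli) (Ne.symm hlj)
          simp [hij, hij.symm, hli, hlj] at e3 e2 ⊢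
          rcases hs with rfl | rfl <;> rcases ht with rfl | rfl <;> omega
    subst key
    obtain ⟨a, rfl⟩ := G.exists_smul (rt_pair hij (by omega) ht) hy hy0 hz
    apply hne
    rw [smul_lie, ← lie_skew, h0]; simp
  · rw [evl_apply, evl_apply]; simp [hij.symm]
    rcases ht with rfl | rfl <;> norm_num

lemma ne_c {i j l : Fin m} (hij : i ≠ j) (hil : i ≠ l) (hjl : j ≠ l) {s t u : ℤ}
    (hs : s = 1 ∨ s = -1) (ht : t = 1 ∨ t = -1) (hu : u = 1 ∨ u = -1)
    {x y : L} (hx : x ∈ G.g (Pi.single i (-s) + Pi.single l u)) (hx0 : x ≠ 0)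
    (hy : y ∈ G.g (Pi.single i s + Pi.single j t)) (hy0 : y ≠ 0) : ⁅x, y⁆ ≠ 0 := by
  intro h0
  obtain ⟨w, hw, hw0⟩ := G.exists_ne (rt_long j (s := -t) (by omega))
  have hw1 : ⁅w, y⁆ ≠ 0 := by
    refine G.ne_b hij.symm (s := -t) (t := s) (by omega) hs hw hw0 ?_ hy0
    rwa [neg_neg, add_comm]
  have hw2 : ⁅w, y⁆ ∈ G.g (Pi.single i s + Pi.single j (-t)) := by
    convert G.bracket hw hy using 1
    have : (Pi.single j (2 * -t) : Fin m → ℤ) + (Pi.single i s + Pi.single j t) =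
      Pi.single i s + (Pi.single j (2 * -t) + Pi.single j t) := by abel
    rw [this, ← Pi.single_add]
    congr 3; ring
  have hxw : ⁅x, w⁆ = 0 := by
    by_contra hne
    have r := G.zr_of_ne (G.bracket hx hw) hne
    have := rt_bound3 r hij hil hjl
    simp [hij, hil, hjl, hij.symm, hil.symm, hjl.symm] at this
    omega
  have hxu : ⁅x, ⁅w, y⁆⁆ = 0 := by rw [leibniz_lie, hxw, h0]; simp
  have hyu : ⁅y, ⁅w, y⁆⁆ ≠ 0 := G.ne_a hij hs ht hy hy0 hw2 hw1
  have hyu2 : ⁅y, ⁅w, y⁆⁆ ∈ G.g (Pi.single i (2 * s)) := by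
    convert G.bracket hy hw2 using 1
    have : (Pi.single i s + Pi.single j t : Fin m → ℤ) + (Pi.single i s + Pi.single j (-t)) =
      (Pi.single i s + Pi.single i s) + (Pi.single j t + Pi.single j (-t)) := by abel
    rw [this, ← Pi.single_add, ← Pi.single_add]
    simp [two_mul]
  have := G.ne_b hil hs hu hyu2 hyu hx hx0
  apply this
  rw [← lie_skew, leibniz_lie, h0, hxu]; simp

end CGrad
end SpAux

namespace SpAux

lemma exp_eq_csum {V : Type*} [AddCommGroup V] [Module ℂ V] [Module ℚ (Module.End ℂ V)]
    (f : Module.End ℂ V) {n : ℕ} (h : f ^ n = 0) :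
    IsNilpotent.exp f = ∑ i ∈ Finset.range n, ((i.factorial : ℂ)⁻¹) • f ^ i := by
  rw [IsNilpotent.exp_eq_sum h]
  refine Finset.sum_congr rfl fun i _ => ?_
  rw [← Rat.cast_smul_eq_qsmul ℂ]
  simp

lemma nilExp_eq_exp {V : Type*} [AddCommGroup V] [Module ℂ V] [FiniteDimensional ℂ V]
    [Module ℚ (Module.End ℂ V)] (f : Module.End ℂ V) (hf : IsNilpotent f) :
    nilExp f = IsNilpotent.exp f := by
  have h : f ^ (Module.finrank ℂ V + 1) = 0 := by
    obtain ⟨n, hn⟩ := hf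
    have h1 := Module.End.ker_pow_le_ker_pow_finrank f n
    rw [hn, LinearMap.ker_zero] at h1
    rw [pow_succ, LinearMap.ker_eq_top.1 (top_le_iff.1 h1), zero_mul]
  rw [exp_eq_csum f h, nilExp]

variable {L : Type*} [LieRing L] [LieAlgebra ℂ L] [FiniteDimensional ℂ L]

lemma nilExp_mem (f : Module.End ℂ L) (p : Submodule ℂ L) (h : ∀ y ∈ p, f y ∈ p) :
    ∀ y ∈ p, nilExp f y ∈ p := by
  intro y hy
  rw [nilExp, LinearMap.sum_apply]
  refine sum_mem fun i hi => ?_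
  rw [LinearMap.smul_apply]
  refine p.smul_mem _ ?_
  clear hi
  induction i with
  | zero => simpa using hy
  | succ i ih => rw [pow_succ']; exact h _ ih

lemma exp_package (x : L) (hx : IsNilpotent (ad ℂ L x)) :
    ∃ e : L ≃ₗ⁅ℂ⁆ L, (∀ y, e y = nilExp (ad ℂ L x) y) ∧
      (∀ p : Submodule ℂ L, (∀ y ∈ p, ⁅x, y⁆ ∈ p) → ∀ y, e y ∈ p ↔ y ∈ p) ∧
      (∀ (k : ℕ) (Φ : Matrix (Fin k) (Fin k) ℂ →ₗ[ℂ] L) (X : Matrix (Fin k) (Fin k) ℂ),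
        IsNilpotent X → (∀ S, ⁅x, Φ S⁆ = Φ (rho X S)) →
        ∀ S, e (Φ S) = Φ ((IsNilpotent.exp (-X)).transpose * S * IsNilpotent.exp (-X))) := by
  letI : Module ℚ L := Module.compHom L (algebraMap ℚ ℂ)
  haveI : IsScalarTower ℚ ℂ L := ⟨fun a b y => by
    change (a • b) • y = (algebraMap ℚ ℂ a) • (b • y)
    rw [Algebra.smul_def, mul_smul]⟩
  letI : LieAlgebra ℚ L := 
    { lie_smul := fun t x y => by
        change ⁅x, (algebraMap ℚ ℂ t) • y⁆ = (algebraMap ℚ ℂ t) • ⁅x, y⁆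
        rw [lie_smul] }
  let D : LieDerivation ℂ L L := LieDerivation.ad ℂ L x
  have hDx : D.toLinearMap = ad ℂ L x := by ext y; simp [D]
  have hD : IsNilpotent D.toLinearMap := by rw [hDx]; exact hx
  have he : ∀ y, LieDerivation.exp D hD y = nilExp (ad ℂ L x) y := by
    intro y
    rw [LieDerivation.exp_map_apply, hDx, nilExp_eq_exp _ hx]
  refine ⟨LieDerivation.exp D hD, he, ?_, ?_⟩
  · intro p hp y
    constructor
    · intro h
      have h1 := nilExp_mem (- ad ℂ L x) p (fun y hy => by
        rw [LinearMap.neg_apply]; exact neg_mem (hp y hy)) _ h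
      rw [he, nilExp_eq_exp _ hx.neg, nilExp_eq_exp _ hx] at h1
      have h2 := congrArg (fun f => f y) (IsNilpotent.exp_neg_mul_exp_self hx)
      simp only [Module.End.mul_apply, Module.End.one_apply] at h2
      rwa [h2] at h1
    · intro h
      rw [he]
      exact nilExp_mem _ p hp y h
  · intro k Φ X hX hΦ S
    rw [he, ← exp_rho hX, nilExp_eq_exp _ hx]
    obtain ⟨n1, h1⟩ := hx
    obtain ⟨n2, h2⟩ := rho_nilp hX
    rw [exp_eq_csum _ (n := n1 + n2) (by rw [pow_add, h1, zero_mul]), 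
      exp_eq_csum _ (n := n1 + n2) (by rw [pow_add, h2, mul_zero])]
    rw [LinearMap.sum_apply, LinearMap.sum_apply, map_sum]
    refine Finset.sum_congr rfl fun i hi => ?_
    rw [LinearMap.smul_apply, LinearMap.smul_apply, map_smul]
    congr 1
    clear hi
    induction i with
    | zero => simp
    | succ i ih => 
      rw [pow_succ', pow_succ', Module.End.mul_apply, Module.End.mul_apply, ih, ad_apply, hΦ]

end SpAux

namespace SpAux

abbrev polyF (V : Type*) [AddCommGroup V] [Module ℂ V] : Subalgebra ℂ (V → ℂ) :=
  Algebra.adjoin ℂ (Set.range fun l : Module.Dual ℂ V => (l : V → ℂ))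

section
variable {V : Type*} [AddCommGroup V] [Module ℂ V]

lemma polyF_line {p : V → ℂ} (hp : p ∈ polyF V) (a b : V) :
    ∃ P : Polynomial ℂ, ∀ z : ℂ, p (a + z • (b - a)) = P.eval z := by
  induction hp using Algebra.adjoin_induction with
  | mem x hx =>
    obtain ⟨l, rfl⟩ := hx
    refine ⟨Polynomial.C (l a) + Polynomial.X * Polynomial.C (l (b - a)), fun z => ?_⟩
    simp only [map_add, map_smul, smul_eq_mul, Polynomial.eval_add, Polynomial.eval_mul,
      Polynomial.eval_C, Polynomial.eval_X]
  | algebraMap r => exact ⟨Polynomial.C r, fun z => by simp⟩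
  | add x y _ _ hx hy =>
    obtain ⟨P, hP⟩ := hx
    obtain ⟨Q, hQ⟩ := hy
    exact ⟨P + Q, fun z => by simp [hP, hQ]⟩
  | mul x y _ _ hx hy =>
    obtain ⟨P, hP⟩ := hx
    obtain ⟨Q, hQ⟩ := hy
    exact ⟨P * Q, fun z => by simp [hP, hQ]⟩

lemma polyF_common {p q : V → ℂ} (hp : p ∈ polyF V) (hq : q ∈ polyF V) {a b : V}
    (ha : p a ≠ 0) (hb : q b ≠ 0) : ∃ v, p v ≠ 0 ∧ q v ≠ 0 := by
  obtain ⟨P, hP⟩ := polyF_line hp a b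
  obtain ⟨Q, hQ⟩ := polyF_line hq a b
  have hP0 : P ≠ 0 := by
    rintro rfl
    have := hP 0
    simp at this
    exact ha this
  have hQ0 : Q ≠ 0 := by
    rintro rfl
    have := hQ 1
    simp at this
    exact hb this
  by_contra hcon
  push Not at hcon
  apply mul_ne_zero hP0 hQ0
  apply Polynomial.funext
  intro z
  rw [Polynomial.eval_mul, Polynomial.eval_zero, ← hP, ← hQ]
  by_cases h : p (a + z • (b - a)) = 0
  · rw [h, zero_mul]
  · rw [hcon _ h, mul_zero]

lemma z_open_dense {p : V → ℂ} (hp : p ∈ polyF V) {v : V} (hv : p v ≠ 0) :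
    zOpen {w | p w ≠ 0} ∧ zDense {w | p w ≠ 0} := by
  refine ⟨TopologicalSpace.isOpen_generateFrom_of_mem ⟨p, hp, rfl⟩, ?_⟩
  letI := zariskiTop V
  have hB : TopologicalSpace.IsTopologicalBasis
      {U : Set V | ∃ p ∈ polyF V, U = {v | p v ≠ 0}} := by
    refine ⟨?_, ?_, rfl⟩
    · rintro U ⟨p, hp, rfl⟩ W ⟨q, hq, rfl⟩ x ⟨hx1, hx2⟩
      refine ⟨_, ⟨p * q, mul_mem hp hq, rfl⟩, mul_ne_zero hx1 hx2, ?_⟩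
      intro y hy
      exact ⟨left_ne_zero_of_mul (a := p y) (b := q y) hy,
        right_ne_zero_of_mul (a := p y) (b := q y) hy⟩
    · refine Set.eq_univ_of_forall fun x => ⟨_, ⟨1, one_mem _, rfl⟩, ?_⟩
      exact one_ne_zero
  change Dense _
  rw [hB.dense_iff]
  rintro U ⟨q, hq, rfl⟩ ⟨y, hy⟩
  obtain ⟨u, h1, h2⟩ := polyF_common hq hp hy hv
  exact ⟨u, h1, h2⟩

end
end SpAux

namespace SpAux

section
variable {L : Type*} [LieRing L] [LieAlgebra ℂ L] {m : ℕ} (G : CGrad L m)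

lemma CGrad.lie_zero3 {c d : Fin m → ℤ} {x y : L} (hx : x ∈ G.g c) (hy : y ∈ G.g d)
    {i j l : Fin m} (hij : i ≠ j) (hil : i ≠ l) (hjl : j ≠ l)
    (h : 2 < ((c + d) i).natAbs + ((c + d) j).natAbs + ((c + d) l).natAbs) : ⁅x, y⁆ = 0 := by
  by_contra hne
  have := rt_bound3 (G.zr_of_ne (G.bracket hx hy) hne) hij hil hjl
  omega

lemma CGrad.lie_zero2 {c d : Fin m → ℤ} {x y : L} (hx : x ∈ G.g c) (hy : y ∈ G.g d)
    {i j : Fin m} (hij : i ≠ j)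
    (h : 2 < ((c + d) i).natAbs + ((c + d) j).natAbs) : ⁅x, y⁆ = 0 := by
  by_contra hne
  have := rt_bound2 (G.zr_of_ne (G.bracket hx hy) hne) hij
  omega

/-- weights -/
def wE {m k : ℕ} (p : Fin (k+1) → Fin m) (i j : Fin (k+1)) : Fin m → ℤ :=
  Pi.single (p i) 1 + Pi.single (p j) (-1)
def wF {m k : ℕ} (p : Fin (k+1) → Fin m) (i j : Fin (k+1)) : Fin m → ℤ :=
  Pi.single (p i) (-1) + Pi.single (p j) (-1)

lemma exists_E [LieAlgebra.IsSimple ℂ L] {k : ℕ} (p : Fin (k+1) → Fin m)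
    (hp : Function.Injective p) :
    ∃ E : Fin (k+1) → Fin (k+1) → L, (∀ i j, E i j ∈ G.g (wE p i j)) ∧
      (∀ i j, i < j → E i j ≠ 0) ∧ (∀ i j, ¬ i < j → E i j = 0) ∧
      (∀ i j, i ≠ 0 → i < j → ⁅E 0 i, E i j⁆ = E 0 j) := by
  have h0 : ∀ j : Fin (k+1), ∃ y ∈ G.g (wE p 0 j), (j ≠ 0 → y ≠ 0) := by
    intro j
    by_cases hj : j = 0
    · exact ⟨0, zero_mem _, fun h => (h hj).elim⟩
    · obtain ⟨y, hy, hy0⟩ := G.exists_ne (c := wE p 0 j)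
        (rt_pair (by simpa [hp.eq_iff] using Ne.symm hj) (Or.inl rfl) (Or.inr rfl))
      exact ⟨y, hy, fun _ => hy0⟩
  choose E0 hE0 hE0' using h0
  have h1 : ∀ i j : Fin (k+1), ∃ y ∈ G.g (wE p i j), i ≠ 0 → i < j → ⁅E0 i, y⁆ = E0 j := by
    intro i j
    by_cases hij : i ≠ 0 ∧ i < j
    · obtain ⟨hi, hij⟩ := hij
      have hj : j ≠ 0 := by rintro rfl; exact absurd hij (Fin.not_lt_zero i)
      obtain ⟨y, hy, hy0⟩ := G.exists_ne (c := wE p i j)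
        (rt_pair (by simpa [hp.eq_iff] using hij.ne) (Or.inl rfl) (Or.inr rfl))
      have hx : E0 i ∈ G.g (Pi.single (p i) (-1) + Pi.single (p 0) 1) := by
        rw [add_comm]; exact hE0 i
      have hne := G.ne_c (i := p i) (j := p j) (l := p 0) (s := 1) (t := -1) (u := 1)
        (by simpa [hp.eq_iff] using hij.ne) (by simpa [hp.eq_iff] using hi)
        (by simpa [hp.eq_iff] using hj) (Or.inl rfl) (Or.inr rfl) (Or.inl rfl) 
        hx (hE0' i hi) hy hy0
      have hm : ⁅E0 i, y⁆ ∈ G.g (wE p 0 j) := by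
        convert G.bracket hx hy using 1
        have : (Pi.single (p i) (-1) + Pi.single (p 0) 1 : Fin m → ℤ) + wE p i j =
          (Pi.single (p i) (-1) + Pi.single (p i) 1) + wE p 0 j := by unfold wE; abel
        rw [this, ← Pi.single_add]; simp
      obtain ⟨a, ha⟩ := G.exists_smul (rt_pair (by simpa [hp.eq_iff] using Ne.symm hj)
        (Or.inl rfl) (Or.inr rfl)) hm hne (hE0 j)
      exact ⟨a • y, Submodule.smul_mem _ _ hy, fun _ _ => by rw [lie_smul, ha]⟩
    · exact ⟨0, zero_mem _, fun a b => (hij ⟨a, b⟩).elim⟩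
  choose E1 hE1 hE1' using h1
  refine ⟨fun i j => if i < j then (if i = 0 then E0 j else E1 i j) else 0, ?_, ?_, ?_, ?_⟩
  · intro i j
    dsimp only
    split_ifs with h2 h3
    · rw [h3]; exact hE0 j
    · exact hE1 i j
    · exact zero_mem _
  · intro i j hij
    have hj : j ≠ 0 := by rintro rfl; exact absurd hij (Fin.not_lt_zero i)
    simp only [if_pos hij]
    split_ifs with h3
    · exact hE0' j hj
    · intro h
      have := hE1' i j h3 hij
      rw [h, lie_zero] at this
      exact hE0' j hj this.symm
  · intro i j hij
    simp [hij]
  · intro i j hi hij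
    have hj : j ≠ 0 := by rintro rfl; exact absurd hij (Fin.not_lt_zero i)
    simp only [if_pos hij, if_pos (Fin.pos_of_ne_zero hi), if_pos (Fin.pos_of_ne_zero hj), if_true,
      if_neg hi]
    exact hE1' i j hi hij

lemma exists_EF [LieAlgebra.IsSimple ℂ L] {k : ℕ} (p : Fin (k+1) → Fin m)
    (hp : Function.Injective p) :
    ∃ E F : Fin (k+1) → Fin (k+1) → L, (∀ i j, E i j ∈ G.g (wE p i j)) ∧
      (∀ i j, i < j → E i j ≠ 0) ∧ (∀ i j, ¬ i < j → E i j = 0) ∧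
      (∀ i j, F i j ∈ G.g (wF p i j)) ∧ (∀ i j, F i j ≠ 0) ∧ (∀ i j, F i j = F j i) ∧
      ∀ a b, a < b → ∀ i j,
        ⁅E a b, F i j⁆ = -((if a = i then F b j else 0) + (if a = j then F i b else 0)) := by
  obtain ⟨E, hE, hEne, hE0, hEE⟩ := exists_E G p hp
  obtain ⟨f, hf, hf0⟩ := G.exists_ne (rt_long (p 0) (s := -1) (Or.inr rfl))
  have hcomm : ∀ i j, ⁅E 0 i, E 0 j⁆ = 0 := by
    intro i j
    by_cases hi : i = 0
    · rw [hE0 0 i (by simp [hi]), zero_lie]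
    by_cases hj : j = 0
    · rw [hE0 0 j (by simp [hj]), lie_zero]
    by_cases hij : i = j
    · rw [hij, lie_self]
    · refine G.lie_zero3 (hE 0 i) (hE 0 j) (i := p 0) (j := p i) (l := p j) ?_ ?_ ?_ ?_
      · simpa [hp.eq_iff] using Ne.symm hi
      · simpa [hp.eq_iff] using Ne.symm hj
      · simpa [hp.eq_iff] using hij
      · simp [wE, Pi.single_apply, hp.eq_iff, hi, hj, hij, Ne.symm hi, Ne.symm hj, Ne.symm hij]
  let F0 : Fin (k+1) → L := fun j => if j = 0 then f else (-(1/2 : ℂ)) • ⁅E 0 j, f⁆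
  let F : Fin (k+1) → Fin (k+1) → L := fun i j => if i = 0 then F0 j else
    if j = 0 then F0 i else - ⁅E 0 i, F0 j⁆
  have F0z : F0 0 = f := by simp [F0]
  have F0n : ∀ j, j ≠ 0 → F0 j = (-(1/2 : ℂ)) • ⁅E 0 j, f⁆ := fun j hj => by simp [F0, hj]
  have Fz : ∀ j, F 0 j = F0 j := fun j => by simp [F]
  have Fn : ∀ i j, i ≠ 0 → j ≠ 0 → F i j = - ⁅E 0 i, F0 j⁆ := fun i j hi hj => by simp [F, hi, hj]
  have hF0 : ∀ j, F0 j ∈ G.g (wF p 0 j) := by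
    intro j
    by_cases hj : j = 0
    · rw [hj, F0z]
      convert hf using 1
      rw [wF, ← Pi.single_add]; norm_num
    · rw [F0n j hj]
      refine Submodule.smul_mem _ _ ?_
      convert G.bracket (hE 0 j) hf using 1
      have : wE p 0 j + Pi.single (p 0) (2 * -1) = 
         (Pi.single (p 0) 1 + Pi.single (p 0) (2 * -1)) + Pi.single (p j) (-1) := by
        unfold wE; abel
      rw [this, ← Pi.single_add]; rfl
  have hF0ne : ∀ j, F0 j ≠ 0 := by
    intro j
    by_cases hj : j = 0
    · rw [hj, F0z]; exact hf0
    · rw [F0n j hj]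
      refine smul_ne_zero (by norm_num) ?_
      have := G.ne_b (i := p 0) (j := p j) (s := -1) (t := -1)
        (by simpa [hp.eq_iff] using Ne.symm hj) (Or.inr rfl) (Or.inr rfl) hf hf0
        (by rw [neg_neg]; exact hE 0 j) (hEne 0 j (Fin.pos_of_ne_zero hj))
      rw [← lie_skew]
      exact neg_ne_zero.2 this
  have hFm : ∀ i j, i ≠ 0 → j ≠ 0 → F i j ∈ G.g (wF p i j) := by
    intro i j hi hj
    rw [Fn i j hi hj]
    refine neg_mem ?_
    convert G.bracket (hE 0 i) (hF0 j) using 1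
    have : wE p 0 i + wF p 0 j = (Pi.single (p 0) 1 + Pi.single (p 0) (-1)) + wF p i j := by
      unfold wE wF; abel
    rw [this, ← Pi.single_add]; simp
  have hFsymm : ∀ i j, F i j = F j i := by
    intro i j
    by_cases hi : i = 0
    · by_cases hj : j = 0
      · rw [hi, hj]
      · simp [F, hi, hj]
    · by_cases hj : j = 0
      · simp [F, hi, hj]
      · rw [Fn i j hi hj, Fn j i hj hi, F0n j hj, F0n i hi, lie_smul, lie_smul, leibniz_lie,
          hcomm, zero_lie, zero_add]
  have hFmem : ∀ i j, F i j ∈ G.g (wF p i j) := by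
    intro i j
    by_cases hi : i = 0
    · rw [hi, Fz]; exact hF0 j
    · by_cases hj : j = 0
      · rw [hj, hFsymm, Fz]
        have := hF0 i
        rwa [wF, add_comm] at this
      · exact hFm i j hi hj
  have hFne : ∀ i j, F i j ≠ 0 := by
    intro i j
    by_cases hi : i = 0
    · rw [hi, Fz]; exact hF0ne j
    · by_cases hj : j = 0
      · rw [hj, hFsymm, Fz]; exact hF0ne i
      · rw [Fn i j hi hj]
        refine neg_ne_zero.2 ?_
        have e0 := hEne 0 i (Fin.pos_of_ne_zero hi)
        by_cases hij : i = j
        · subst hij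
          refine G.ne_a (i := p i) (j := p 0) (s := -1) (t := 1)
            (by simpa [hp.eq_iff] using hi) (Or.inr rfl) (Or.inl rfl) ?_ e0 ?_ (hF0ne i)
          · rw [add_comm]; exact hE 0 i
          · rw [add_comm]; exact hF0 i
        · rw [← lie_skew]
          refine neg_ne_zero.2 ?_
          exact G.ne_c (i := p 0) (j := p i) (l := p j) (s := 1) (t := -1) (u := -1)
            (by simpa [hp.eq_iff] using Ne.symm hi) (by simpa [hp.eq_iff] using Ne.symm hj)
            (by simpa [hp.eq_iff] using hij) (Or.inl rfl) (Or.inr rfl) (Or.inr rfl)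
            (hF0 j) (hF0ne j) (hE 0 i) e0
  -- the relations
  have hEE' : ∀ a b j, a ≠ 0 → a < b → j ≠ 0 → ⁅E a b, E 0 j⁆ = if a = j then - E 0 b else 0 := by
    intro a b j ha hab hj
    have hb : b ≠ 0 := by rintro rfl; exact absurd hab (Fin.not_lt_zero a)
    have hne := hab.ne
    split_ifs with h
    · rw [← h, ← lie_skew, hEE a b ha hab]
    · refine G.lie_zero3 (hE a b) (hE 0 j) (i := p 0) (j := p a) (l := p b) ?_ ?_ ?_ ?_
      · simpa [hp.eq_iff] using Ne.symm ha
      · simpa [hp.eq_iff] using Ne.symm hb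
      · simpa [hp.eq_iff] using hab.ne
      · by_cases hjb : j = b
        · simp [wE, Pi.single_apply, hp.eq_iff, ha, hb, hne, hne.symm, Ne.symm ha, Ne.symm hb, hjb]
        · simp [wE, Pi.single_apply, hp.eq_iff, ha, hb, hne, hne.symm, Ne.symm ha, Ne.symm hb, 
            Ne.symm hjb, Ne.symm hj, h]
  have r1 : ∀ a b, a ≠ 0 → a < b → ⁅E a b, f⁆ = 0 := by
    intro a b ha hab
    have hb : b ≠ 0 := by rintro rfl; exact absurd hab (Fin.not_lt_zero a)
    have hne := hab.ne
    refine G.lie_zero3 (hE a b) hf (i := p 0) (j := p a) (l := p b) ?_ ?_ ?_ ?_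
    · simpa [hp.eq_iff] using Ne.symm ha
    · simpa [hp.eq_iff] using Ne.symm hb
    · simpa [hp.eq_iff] using hab.ne
    · simp [wE, Pi.single_apply, hp.eq_iff, ha, hb, hne, hne.symm, Ne.symm ha, Ne.symm hb]
  have r2 : ∀ a b j, a ≠ 0 → a < b → j ≠ 0 → ⁅E a b, F0 j⁆ = if a = j then - F0 b else 0 := by
    intro a b j ha hab hj
    have hb : b ≠ 0 := by rintro rfl; exact absurd hab (Fin.not_lt_zero a)
    rw [F0n j hj, lie_smul, leibniz_lie, r1 a b ha hab, lie_zero, add_zero, hEE' a b j ha hab hj]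
    split_ifs
    · rw [F0n b hb, neg_lie, smul_neg]
    · rw [zero_lie, smul_zero]
  have r3 : ∀ b i j, b ≠ 0 → i ≠ 0 → j ≠ 0 → ⁅E 0 b, F i j⁆ = 0 := by
    intro b i j hb hi hj
    have hbm := hE 0 b
    have hfm := hFmem i j
    have q1 : p 0 ≠ p b := by simpa [hp.eq_iff] using Ne.symm hb
    by_cases hbi : b = i
    · subst hbi
      refine G.lie_zero2 hbm hfm q1 ?_
      by_cases hbj : b = j
      · simp [wE, wF, Pi.single_apply, hp.eq_iff, hb, Ne.symm hb, ← hbj]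
      · simp [wE, wF, Pi.single_apply, hp.eq_iff, hb, Ne.symm hb, hj, Ne.symm hj, hbj]
    · have q2 : p 0 ≠ p i := by simpa [hp.eq_iff] using Ne.symm hi
      have q3 : p b ≠ p i := by simpa [hp.eq_iff] using hbi
      refine G.lie_zero3 hbm hfm q1 q2 q3 ?_
      simp only [wE, wF, Pi.single_apply, Pi.add_apply, hp.eq_iff, hb, hi, hj, Ne.symm hb, hbi, 
        Ne.symm hi, Ne.symm hj, Ne.symm hbi, if_true, if_false]
      split_ifs <;> simp
  refine ⟨E, F, hE, hEne, hE0, hFmem, hFne, hFsymm, ?_⟩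
  intro a b hab i j
  have hb : b ≠ 0 := by rintro rfl; exact absurd hab (Fin.not_lt_zero a)
  by_cases ha : a = 0
  · subst ha
    by_cases hi : i = 0
    · subst hi
      by_cases hj : j = 0
      · subst hj
        rw [if_pos rfl, if_pos rfl, hFsymm b 0, Fz, Fz, F0z, F0n b hb, ← add_smul, ← neg_smul]
        norm_num
      · rw [if_pos rfl, if_neg (Ne.symm hj), add_zero, Fn b j hb hj, neg_neg, Fz]
    · by_cases hj : j = 0
      · subst hj
        rw [if_neg (Ne.symm hi), if_pos rfl, zero_add, hFsymm i b, Fn b i hb hi, neg_neg,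
          hFsymm i 0, Fz]
      · rw [if_neg (Ne.symm hi), if_neg (Ne.symm hj), r3 b i j hb hi hj]; simp
  · by_cases hi : i = 0
    · subst hi
      by_cases hj : j = 0
      · subst hj
        rw [if_neg ha, if_neg ha, Fz, F0z, r1 a b ha hab]; simp
      · rw [if_neg ha, Fz, r2 a b j ha hab hj, Fz, zero_add]
        split_ifs <;> simp
    · by_cases hj : j = 0
      · subst hj
        rw [if_neg ha, hFsymm i 0, Fz, r2 a b i ha hab hi, hFsymm b 0, Fz, add_zero]
        split_ifs <;> simp
      · rw [Fn i j hi hj, lie_neg, leibniz_lie, hEE' a b i ha hab hi, r2 a b j ha hab hj]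
        congr 1
        congr 1
        · split_ifs
          · rw [Fn b j hb hj, neg_lie]
          · rw [zero_lie]
        · split_ifs
          · rw [Fn i b hi hb, lie_neg]
          · rw [lie_zero]

end
end SpAux

namespace SpAux

section
variable {m k : ℕ} (p : Fin (k+1) → Fin m)

def deg : (Fin m → ℤ) →+ ℤ where
  toFun c := ∑ i, c (p i)
  map_zero' := by simp
  map_add' := by intro x y; simp [Finset.sum_add_distrib]

def hgt : (Fin m → ℤ) →+ ℤ where
  toFun c := ∑ i : Fin (k+1), - (i : ℤ) * c (p i)
  map_zero' := by simp
  map_add' := by intro x y; simp [Finset.sum_add_distrib, mul_add]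

variable {p} (hp : Function.Injective p)
include hp

lemma deg_single (i : Fin (k+1)) (s : ℤ) : deg p (Pi.single (p i) s) = s := by
  simp [deg, Pi.single_apply, hp.eq_iff]

lemma deg_single_out {l : Fin m} (hl : ∀ i, p i ≠ l) (s : ℤ) : deg p (Pi.single l s) = 0 := by
  simp only [deg, AddMonoidHom.coe_mk, ZeroHom.coe_mk]
  refine Finset.sum_eq_zero fun i _ => ?_
  rw [Pi.single_apply, if_neg (hl i)]

lemma deg_wE (i j : Fin (k+1)) : deg p (wE p i j) = 0 := by
  rw [wE, map_add, deg_single hp, deg_single hp]; norm_num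

lemma deg_wF (i j : Fin (k+1)) : deg p (wF p i j) = -2 := by
  rw [wF, map_add, deg_single hp, deg_single hp]; norm_num

lemma hgt_wE (i j : Fin (k+1)) : hgt p (wE p i j) = j - i := by
  simp [hgt, wE, Pi.single_apply, hp.eq_iff, mul_add, Finset.sum_add_distrib]
  ring

lemma deg_cases {c : Fin m → ℤ} (h : IsRt c) :
    (∃ i j : Fin (k+1), ∃ s s' : ℤ, (s = 1 ∨ s = -1) ∧ (s' = 1 ∨ s' = -1) ∧
      c = Pi.single (p i) s + Pi.single (p j) s' ∧ deg p c = s + s') ∨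
    (∃ i : Fin (k+1), ∃ l : Fin m, ∃ s s' : ℤ, (s = 1 ∨ s = -1) ∧ (s' = 1 ∨ s' = -1) ∧
      (∀ i, p i ≠ l) ∧ c = Pi.single (p i) s + Pi.single l s' ∧ deg p c = s) ∨
    deg p c = 0 := by
  obtain ⟨_, a, b, s, s', hs, hs', rfl⟩ := h
  by_cases ha : ∃ i, p i = a
  · obtain ⟨i, rfl⟩ := ha
    by_cases hb : ∃ i, p i = b
    · obtain ⟨j, rfl⟩ := hb
      exact Or.inl ⟨i, j, s, s', hs, hs', rfl, by rw [map_add, deg_single hp, deg_single hp]⟩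
    · push Not at hb
      exact Or.inr (Or.inl ⟨i, b, s, s', hs, hs', hb, rfl,
        by rw [map_add, deg_single hp, deg_single_out hp hb, add_zero]⟩)
  · push Not at ha
    by_cases hb : ∃ i, p i = b
    · obtain ⟨j, rfl⟩ := hb
      exact Or.inr (Or.inl ⟨j, a, s', s, hs', hs, ha, add_comm _ _,
        by rw [map_add, deg_single hp, deg_single_out hp ha, zero_add]⟩)
    · push Not at hb
      exact Or.inr (Or.inr (by rw [map_add, deg_single_out hp hb, deg_single_out hp ha, zero_add]))

lemma deg_le_two {c : Fin m → ℤ} (h : c = 0 ∨ IsRt c) : deg p c ≤ 2 := by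
  rcases h with rfl | h
  · simp
  · rcases deg_cases hp h with ⟨i, j, s, s', hs, hs', _, h⟩ | ⟨i, l, s, s', hs, hs', _, _, h⟩ | h <;>
    omega

lemma deg_neg2 {c : Fin m → ℤ} (h : IsRt c) (hd : deg p c = -2) : ∃ i j, c = wF p i j := by
  rcases deg_cases hp h with ⟨i, j, s, s', hs, hs', h1, h⟩ | ⟨i, l, s, s', hs, hs', _, _, h⟩ | h
  · obtain rfl : s = -1 := by omega
    obtain rfl : s' = -1 := by omega
    exact ⟨i, j, h1⟩
  · omega
  · omega

lemma deg_one {c : Fin m → ℤ} (h : IsRt c) (hd : deg p c = 1) : 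
    ∃ i l s, (s = 1 ∨ s = -1) ∧ (∀ i, p i ≠ l) ∧ c = Pi.single (p i) 1 + Pi.single l s := by
  rcases deg_cases hp h with ⟨i, j, s, s', hs, hs', h1, h⟩ | ⟨i, l, s, s', hs, hs', h1, h2, h⟩ | h
  · omega
  · obtain rfl : s = 1 := by omega
    exact ⟨i, l, s', hs', h1, h2⟩
  · omega

lemma wE_inj {i j a b : Fin (k+1)} (hij : i ≠ j) (hab : a ≠ b) (h : wE p i j = wE p a b) :
    i = a ∧ j = b := by
  constructor
  · have := congrFun h (p i)
    by_contra hne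
    simp [wE, Pi.single_apply, hp.eq_iff, hij, hne] at this
    split_ifs at this <;> omega
  · have := congrFun h (p j)
    by_contra hne
    simp [wE, Pi.single_apply, hp.eq_iff, Ne.symm hij, hne] at this
    split_ifs at this

lemma wF_inj {i j a b : Fin (k+1)} (h : wF p i j = wF p a b) :
    (a = i ∧ b = j) ∨ (a = j ∧ b = i) := by
  have h1 := congrFun h (p i)
  have h2 := congrFun h (p j)
  have h3 := congrFun h (p a)
  have h4 := congrFun h (p b)
  simp only [wF, Pi.single_apply, hp.eq_iff, Pi.add_apply] at h1 h2 h3 h4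
  by_cases hia : i = a
  · subst hia
    by_cases hjb : j = b
    · subst hjb; simp
    · simp [hjb] at h2
  · by_cases hib : i = b
    · subst hib
      by_cases hja : j = a
      · subst hja; simp
      · simp [hja] at h2
    · simp [hia, hib] at h1
      split_ifs at h1 <;> omega

lemma wE_add {i j a b : Fin (k+1)} (hij : i ≠ j) (hab : a ≠ b) (hne : ¬ (i = b ∧ j = a))
    (h : wE p i j + wE p a b = 0 ∨ IsRt (wE p i j + wE p a b)) :
    (j = a ∧ wE p i j + wE p a b = wE p i b) ∨ (i = b ∧ wE p i j + wE p a b = wE p a j) := by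
  by_cases hja : j = a
  · subst hja
    refine Or.inl ⟨rfl, ?_⟩
    have : wE p i j + wE p j b = wE p i b + (Pi.single (p j) (-1) + Pi.single (p j) 1) := by
      unfold wE; abel
    rw [this, ← Pi.single_add]; simp
  · by_cases hib : i = b
    · subst hib
      refine Or.inr ⟨rfl, ?_⟩
      have : wE p i j + wE p a i = wE p a j + (Pi.single (p i) 1 + Pi.single (p i) (-1)) := by
        unfold wE; abel
      rw [this, ← Pi.single_add]; simp
    · exfalso
      have qij : p i ≠ p j := hp.ne hij
      have qab : p a ≠ p b := hp.ne hab
      have qja : p j ≠ p a := hp.ne hja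
      have qib : p i ≠ p b := hp.ne hib
      have hb2 := rt_bound2 h qij
      by_cases hia : i = a
      · subst hia
        by_cases hjb : j = b
        · subst hjb
          simp [wE, qij, qij.symm] at hb2
        · have qjb : p j ≠ p b := hp.ne hjb
          have hb3 := rt_bound3 h qij qib qjb
          simp [wE, qij, qij.symm, qjb, qjb.symm, qib, qib.symm] at hb3
      · have qia : p i ≠ p a := hp.ne hia
        by_cases hjb : j = b
        · subst hjb
          have hb3 := rt_bound3 h qij qia qja
          simp [wE, qij, qij.symm, qia, qia.symm, qja, qja.symm] at hb3
        · have qjb : p j ≠ p b := hp.ne hjb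
          have hb3 := rt_bound3 h qij qia qja
          simp [wE, qij, qij.symm, qia, qia.symm, qja, qja.symm, qjb, qjb.symm, qib, qib.symm,
            qab, qab.symm] at hb3

end

section
variable {m k : ℕ} (p : Fin (k+1) → Fin m)

/-- degree zero weights -/
def N0 (b : Fin (k+1) → ℕ) : Set (Fin m → ℤ) := {c | ∃ i j, b i < b j ∧ c = wE p i j}

/-- the weights of the nilradical -/
def Nset (b : Fin (k+1) → ℕ) : Set (Fin m → ℤ) :=
  {c | IsRt c ∧ (deg p c = 1 ∨ deg p c = 2 ∨ c ∈ N0 p b)}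

def Pset : Set (Fin m → ℤ) := {c | IsRt c ∧ (deg p c = 1 ∨ c ∈ N0 p (fun i => (i : ℕ)))}

variable {p} (hp : Function.Injective p)
include hp

lemma N0_add (b : Fin (k+1) → ℕ) {c d : Fin m → ℤ} (hc : c ∈ N0 p b) (hd : d ∈ N0 p b)
    (h : c + d = 0 ∨ IsRt (c + d)) : c + d ∈ N0 p b := by
  obtain ⟨i, j, hij, rfl⟩ := hc
  obtain ⟨a, a', haa, rfl⟩ := hd
  rcases wE_add hp (by rintro rfl; omega) (by rintro rfl; omega)
    (by rintro ⟨rfl, rfl⟩; omega) h with ⟨rfl, h⟩ | ⟨rfl, h⟩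
  · exact ⟨_, _, by omega, h⟩
  · exact ⟨_, _, by omega, h⟩

lemma N0_deg {b : Fin (k+1) → ℕ} {c : Fin m → ℤ} (hc : c ∈ N0 p b) : deg p c = 0 := by
  obtain ⟨i, j, hij, rfl⟩ := hc
  exact deg_wE hp i j

lemma N0_rt {b : Fin (k+1) → ℕ} {c : Fin m → ℤ} (hc : c ∈ N0 p b) : IsRt c := by
  obtain ⟨i, j, hij, rfl⟩ := hc
  exact rt_pair (hp.ne (by rintro rfl; omega)) (Or.inl rfl) (Or.inr rfl)

lemma P_form {c : Fin m → ℤ} (hc : c ∈ Pset p) :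
    ∃ i l u, (u = 1 ∨ u = -1) ∧ p i ≠ l ∧ c = Pi.single (p i) 1 + Pi.single l u ∧
      ∀ j, l = p j → i < j := by
  obtain ⟨h1, h2 | ⟨i, j, hij, rfl⟩⟩ := hc
  · obtain ⟨i, l, s, hs, hl, rfl⟩ := deg_one hp h1 h2
    exact ⟨i, l, s, hs, hl i, rfl, fun j hj => (hl j hj.symm).elim⟩
  · refine ⟨i, p j, -1, Or.inr rfl, hp.ne (by rintro rfl; omega), rfl, fun j' hj => ?_⟩
    rw [hp.eq_iff] at hj; rw [← hj]; exact hij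

lemma P_excl {i j : Fin (k+1)} {l : Fin m} {u : ℤ} (hu : u = 1 ∨ u = -1) (hl : p i ≠ l)
    (hlj : ∀ j, l = p j → i < j) (hij : i ≠ j)
    (h : (Pi.single (p i) 1 + Pi.single l u : Fin m → ℤ) + wF p i i - wF p j j ∈ Pset p) : 
    False := by
  have q := hp.ne hij
  have hb := rt_bound2 (Or.inr h.1) q
  by_cases hjl : l = p j
  · have hlt := hlj j hjl
    subst hjl
    simp [wF, q, q.symm] at hb
    obtain rfl : u = -1 := by omega
    have e : (Pi.single (p i) 1 + Pi.single (p j) (-1) : Fin m → ℤ) + wF p i i - wF p j j =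
       wE p j i := by
      funext a
      simp only [wF, wE, Pi.add_apply, Pi.sub_apply, Pi.single_apply]
      split_ifs <;> norm_num
    rw [e] at h
    obtain ⟨_, h | ⟨a, b, hab, h⟩⟩ := h
    · rw [deg_wE hp] at h; norm_num at h
    · obtain ⟨rfl, rfl⟩ := wE_inj hp hij.symm (by rintro rfl; omega) h
      exact lt_asymm hlt hab
  · simp [wF, q, q.symm, hl, Ne.symm hl, hjl, Ne.symm hjl] at hb

lemma N0_val_add_P {c d : Fin m → ℤ} (hc : c ∈ N0 p (fun i => (i : ℕ))) (hd : d ∈ Pset p)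
    (h : c + d = 0 ∨ IsRt (c + d)) : c + d ∈ Pset p := by
  obtain ⟨h1, h2 | h2⟩ := hd
  · have : deg p (c + d) = 1 := by rw [map_add, N0_deg hp hc, h2, zero_add]
    refine ⟨?_, Or.inl this⟩
    rcases h with h | h
    · rw [h, map_zero] at this; norm_num at this
    · exact h
  · have := N0_add hp _ hc h2 h
    exact ⟨N0_rt hp this, Or.inr this⟩

end
end SpAux

namespace SpAux

/-- matrix units for the degree `0` and degree `-2` parts -/
structure EF {L : Type*} [LieRing L] [LieAlgebra ℂ L] {m : ℕ} (G : CGrad L m) {k : ℕ}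
    (p : Fin (k+1) → Fin m) where
  E : Fin (k+1) → Fin (k+1) → L
  F : Fin (k+1) → Fin (k+1) → L
  hE : ∀ i j, E i j ∈ G.g (wE p i j)
  hEne : ∀ i j, i < j → E i j ≠ 0
  hF : ∀ i j, F i j ∈ G.g (wF p i j)
  hFne : ∀ i j, F i j ≠ 0
  hFs : ∀ i j, F i j = F j i
  rel : ∀ a b, a < b → ∀ i j,
        ⁅E a b, F i j⁆ = -((if a = i then F b j else 0) + (if a = j then F i b else 0))

/-- the linear combination with coefficients in a matrix -/
def lc {L : Type*} [AddCommGroup L] [Module ℂ L] {n : ℕ} (F : Fin n → Fin n → L) :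
    Matrix (Fin n) (Fin n) ℂ →ₗ[ℂ] L where
  toFun S := ∑ i, ∑ j, S i j • F i j
  map_add' := by
    intro S S'
    simp [add_smul, Finset.sum_add_distrib]
  map_smul' := by
    intro a S
    simp [mul_smul, Finset.smul_sum]

lemma lc_apply {L : Type*} [AddCommGroup L] [Module ℂ L] {n : ℕ} (F : Fin n → Fin n → L)
    (S : Matrix (Fin n) (Fin n) ℂ) : lc F S = ∑ i, ∑ j, S i j • F i j := rfl

lemma lc_transpose {L : Type*} [AddCommGroup L] [Module ℂ L] {n : ℕ} (F : Fin n → Fin n → L)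
    (hF : ∀ i j, F i j = F j i) (S : Matrix (Fin n) (Fin n) ℂ) : lc F S.transpose = lc F S := by
  rw [lc_apply, lc_apply, Finset.sum_comm]
  refine Finset.sum_congr rfl fun i _ => Finset.sum_congr rfl fun j _ => ?_
  rw [Matrix.transpose_apply, hF]

namespace EF
variable {L : Type*} [LieRing L] [LieAlgebra ℂ L] {m : ℕ} {G : CGrad L m} {k : ℕ}
    {p : Fin (k+1) → Fin m} (D : EF G p)

abbrev Phi : Matrix (Fin (k+1)) (Fin (k+1)) ℂ →ₗ[ℂ] L := lc D.F
abbrev eM : Matrix (Fin (k+1)) (Fin (k+1)) ℂ →ₗ[ℂ] L := lc D.E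

lemma lie_rel (X : Matrix (Fin (k+1)) (Fin (k+1)) ℂ) (hX : ∀ i j, ¬ i < j → X i j = 0)
    (S : Matrix (Fin (k+1)) (Fin (k+1)) ℂ) : ⁅D.eM X, D.Phi S⁆ = D.Phi (rho X S) := by
  have h1 : ⁅D.eM X, D.Phi S⁆ = - ∑ a, ∑ b, ∑ i, ∑ j, (X a b * S i j) •
      ((if a = i then D.F b j else 0) + (if a = j then D.F i b else 0)) := by
    rw [lc_apply, lc_apply, sum_lie, ← Finset.sum_neg_distrib]
    refine Finset.sum_congr rfl fun a _ => ?_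
    rw [sum_lie, ← Finset.sum_neg_distrib]
    refine Finset.sum_congr rfl fun b _ => ?_
    rw [lie_sum, ← Finset.sum_neg_distrib]
    refine Finset.sum_congr rfl fun i _ => ?_
    rw [lie_sum, ← Finset.sum_neg_distrib]
    refine Finset.sum_congr rfl fun j _ => ?_
    by_cases hab : a < b
    · rw [smul_lie, lie_smul, D.rel a b hab, smul_smul, smul_neg]
    · rw [hX a b hab]; simp
  have h2 : D.Phi (X.transpose * S) = ∑ a, ∑ b, ∑ j, (X a b * S a j) • D.F b j := by
    rw [lc_apply]
    conv_rhs => rw [Finset.sum_comm]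
    refine Finset.sum_congr rfl fun b _ => ?_
    conv_rhs => rw [Finset.sum_comm]
    refine Finset.sum_congr rfl fun j _ => ?_
    rw [Matrix.mul_apply, Finset.sum_smul]
    rfl
  have h3 : D.Phi (S * X) = ∑ a, ∑ b, ∑ i, (X a b * S i a) • D.F i b := by
    rw [lc_apply]
    rw [Finset.sum_comm]
    conv_rhs => rw [Finset.sum_comm]
    refine Finset.sum_congr rfl fun b _ => ?_
    conv_rhs => rw [Finset.sum_comm]
    refine Finset.sum_congr rfl fun j _ => ?_
    rw [Matrix.mul_apply, Finset.sum_smul]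
    refine Finset.sum_congr rfl fun a _ => ?_
    rw [mul_comm]
  rw [h1, rho_apply, map_neg, map_add, h2, h3, ← Finset.sum_add_distrib]
  congr 1
  refine Finset.sum_congr rfl fun a _ => ?_
  rw [← Finset.sum_add_distrib]
  refine Finset.sum_congr rfl fun b _ => ?_
  simp only [smul_add, Finset.sum_add_distrib, smul_ite, smul_zero, Finset.sum_ite_eq,
    Finset.mem_univ, if_true]
  congr 1
  rw [Finset.sum_comm]
  simp

lemma eM_mem {b : Fin (k+1) → ℕ} {X : Matrix (Fin (k+1)) (Fin (k+1)) ℂ} (hX : X ∈ strictB b) :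
    D.eM X ∈ G.GS (N0 p b) := by
  rw [lc_apply]
  refine sum_mem fun i _ => sum_mem fun j _ => ?_
  by_cases h : b i < b j
  · exact Submodule.smul_mem _ _ (G.GS_of_mem (D.hE i j) ⟨i, j, h, rfl⟩)
  · rw [hX i j (not_lt.1 h), zero_smul]; exact zero_mem _

lemma eM_surj (hp : Function.Injective p) {b : Fin (k+1) → ℕ} (hb : Monotone b) {y : L}
    (hy : y ∈ G.GS (N0 p b)) : ∃ X ∈ strictB b, D.eM X = y := by
  have : G.GS (N0 p b) ≤ (strictB b).map D.eM := by
    apply G.GS_le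
    rintro c ⟨i, j, hij, rfl⟩ x hx
    have hlt : i < j := hb.reflect_lt hij
    obtain ⟨a, rfl⟩ := G.exists_smul (rt_pair (hp.ne hlt.ne) (Or.inl rfl) (Or.inr rfl))
      (D.hE i j) (D.hEne i j hlt) hx
    refine Submodule.smul_mem _ _ ⟨Matrix.single i j 1, ?_, ?_⟩
    · intro i' j' h
      rw [Matrix.single_apply, if_neg]
      rintro ⟨rfl, rfl⟩; omega
    · rw [lc_apply, Finset.sum_eq_single i, Finset.sum_eq_single j]
      · simp
      · intro j' _ h
        simp [Matrix.single_apply, Ne.symm h]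
      · simp
      · intro i' _ h
        simp [Matrix.single_apply, Ne.symm h]
      · simp
  exact this hy

end EF

section
variable {L : Type*} [LieRing L] [LieAlgebra ℂ L] {m : ℕ} (G : CGrad L m)

lemma CGrad.ad_nilp (h : (Fin m → ℤ) →+ ℤ) {x : L} (hx : x ∈ G.GS {c | 0 < h c}) :
    IsNilpotent (ad ℂ L x) := by
  let M : ℤ := ∑ c ∈ G.B, |h c|
  have hM : ∀ c ∈ G.B, |h c| ≤ M := fun c hc =>
    Finset.single_le_sum (f := fun c => |h c|) (fun c _ => abs_nonneg _) hc
  have h1 : ∀ n : ℕ, ∀ y, ((ad ℂ L x) ^ n) y ∈ G.GS {c | -M + n ≤ h c} := by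
    intro n y
    induction n with
    | zero =>
      intro c hc
      rw [pow_zero, Module.End.one_apply, ← G.pr_sum y, map_sum]
      refine Finset.sum_eq_zero fun d hd => ?_
      refine G.pr_ne (G.pr_mem d y) ?_
      rintro rfl
      apply hc
      have := neg_le_of_abs_le (hM d hd)
      simpa using this
    | succ n ih =>
      rw [pow_succ', Module.End.mul_apply, ad_apply]
      refine G.GS_bracket ?_ hx ih
      intro c hc d hd _
      have h1 : 0 < h c := hc
      have h2 : -M + n ≤ h d := hd
      change -M + ((n + 1 : ℕ) : ℤ) ≤ h (c + d)
      rw [map_add]; push_cast; omega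
  refine ⟨(2 * M + 1).toNat, ?_⟩
  ext y
  rw [LinearMap.zero_apply, ← G.pr_sum (((ad ℂ L x) ^ (2 * M + 1).toNat) y)]
  refine Finset.sum_eq_zero fun c hc => ?_
  refine h1 _ y c ?_
  intro h2
  have h3 : -M + ((2 * M + 1).toNat : ℤ) ≤ h c := h2
  have := le_of_abs_le (hM c hc)
  omega

end

namespace EF
variable {L : Type*} [LieRing L] [LieAlgebra ℂ L] {m : ℕ} {G : CGrad L m} {k : ℕ}
    {p : Fin (k+1) → Fin m} (D : EF G p) (hp : Function.Injective p)

include hp in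
lemma eM_nilp {b : Fin (k+1) → ℕ} (hb : Monotone b) {X : Matrix (Fin (k+1)) (Fin (k+1)) ℂ}
    (hX : X ∈ strictB b) : IsNilpotent (ad ℂ L (D.eM X)) := by
  refine G.ad_nilp (hgt p) (G.GS_mono ?_ (D.eM_mem hX))
  rintro c ⟨i, j, hij, rfl⟩
  have hlt : i < j := hb.reflect_lt hij
  change 0 < hgt p _
  rw [hgt_wE hp]
  have : (i : ℕ) < j := hlt
  omega

include hp in
lemma inj_diag [LieAlgebra.IsSimple ℂ L] {S : Matrix (Fin (k+1)) (Fin (k+1)) ℂ}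
    (hS : ∀ i j, i ≠ j → S i j = 0) (hS' : ∀ i, S i i ≠ 0) {x : L} (hx : x ∈ G.GS (Pset p))
    (h : ⁅D.Phi S, x⁆ = 0) : x = 0 := by
  apply G.ext_pr
  intro c
  by_cases hc : c ∈ Pset p
  swap
  · exact hx c hc
  obtain ⟨i, l, u, hu, hl, rfl, hlj⟩ := P_form hp hc
  set c : Fin m → ℤ := Pi.single (p i) 1 + Pi.single l u with hcd
  have hPhi : D.Phi S = ∑ j, S j j • D.F j j := by
    rw [lc_apply]
    refine Finset.sum_congr rfl fun j _ => ?_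
    rw [Finset.sum_eq_single j]
    · intro j' _ h'
      rw [hS j j' (Ne.symm h'), zero_smul]
    · simp
  have h1 : G.pr (c + wF p i i) ⁅D.Phi S, x⁆ = S i i • ⁅D.F i i, G.pr c x⁆ := by
    rw [hPhi, sum_lie, map_sum, Finset.sum_eq_single i]
    · rw [smul_lie, map_smul, add_comm, G.pr_lie (D.hF i i)]
    · intro j _ hj
      have e : c + wF p i i = wF p j j + (c + wF p i i - wF p j j) := by abel
      rw [smul_lie, map_smul, e, G.pr_lie (D.hF j j), hx, lie_zero, smul_zero]
      intro h'
      exact P_excl hp hu hl hlj (Ne.symm hj) h'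
    · simp
  rw [h, map_zero] at h1
  have h2 := (smul_eq_zero.1 h1.symm).resolve_left (hS' i)
  by_contra hne
  refine G.ne_b hl (s := -1) (t := u) (Or.inr rfl) hu ?_ (D.hFne i i) ?_ hne h2
  · have := D.hF i i
    rwa [wF, ← Pi.single_add] at this
  · rw [neg_neg]; exact G.pr_mem c x

include hp in
lemma inj [LieAlgebra.IsSimple ℂ L] [FiniteDimensional ℂ L]
    {S : Matrix (Fin (k+1)) (Fin (k+1)) ℂ}
    (hS : S.transpose = S) (hg : goodM S) {x : L} (hx : x ∈ G.GS (Pset p))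
    (h : ⁅D.Phi S, x⁆ = 0) : x = 0 := by
  have hmono : Monotone (fun i : Fin (k+1) => (i : ℕ)) := fun i j h => h
  obtain ⟨X, hX, S', hS1, hS2, hS3, hS4⟩ := exists_block (fun i : Fin (k+1) => (i : ℕ)) hS hg
  obtain ⟨e, -, he2, he3⟩ := exp_package (D.eM X) (D.eM_nilp hp hmono hX)
  have hup : ∀ i j : Fin (k+1), ¬ i < j → X i j = 0 := fun i j h => hX i j (not_lt.1 h)
  have h1 := he3 _ D.Phi X (strictB_nilp hX) (D.lie_rel X hup) S'
  rw [← hS4] at h1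
  have hdiag : ∀ i j, i ≠ j → S' i j = 0 := by
    intro i j hij
    rcases lt_or_gt_of_ne hij with h | h
    · rw [← hS1]; exact hS2 h
    · exact hS2 h
  have hd : S' = Matrix.diagonal (fun i => S' i i) := by
    ext i j
    by_cases hij : i = j
    · subst hij; simp
    · rw [hdiag i j hij, Matrix.diagonal_apply_ne _ hij]
  have hne : ∀ i, S' i i ≠ 0 := by
    rw [hd, Matrix.det_diagonal] at hS3
    intro i
    exact Finset.prod_ne_zero_iff.1 hS3.ne_zero i (Finset.mem_univ i)
  obtain ⟨y, hy0⟩ : ∃ y, e y = x := ⟨e.symm x, e.apply_symm_apply x⟩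
  subst hy0
  rw [← h1, ← LieEquiv.map_lie] at h
  have h' : ⁅D.Phi S', y⁆ = 0 := by
    have h0 : e.toLinearEquiv ⁅D.Phi S', y⁆ = 0 := h
    exact (map_eq_zero_iff _ e.toLinearEquiv.injective).1 h0
  have hy : y ∈ G.GS (Pset p) := by
    refine (he2 (G.GS (Pset p)) ?_ y).1 hx
    intro z hz
    refine G.GS_bracket ?_ (D.eM_mem hX) hz
    intro c hc d hd hcd
    exact N0_val_add_P hp hc hd hcd
  rw [D.inj_diag hp hdiag hne hy h']
  exact map_zero e.toLinearEquiv

end EF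
end SpAux

namespace SpAux

lemma exists_EF' {L : Type*} [LieRing L] [LieAlgebra ℂ L] {m : ℕ} (G : CGrad L m) 
    [LieAlgebra.IsSimple ℂ L] {k : ℕ} (p : Fin (k+1) → Fin m) (hp : Function.Injective p) :
    Nonempty (EF G p) := by
  obtain ⟨E, F, h1, h2, h3, h4, h5, h6, h7⟩ := exists_EF G p hp
  exact ⟨⟨E, F, h1, h2, h4, h5, h6, h7⟩⟩

namespace EF
variable {L : Type*} [LieRing L] [LieAlgebra ℂ L] {m : ℕ} {G : CGrad L m} {k : ℕ}
    {p : Fin (k+1) → Fin m} (D : EF G p) (hp : Function.Injective p)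

lemma wF_rt (i j : Fin (k+1)) : IsRt (wF p i j) := by
  refine ⟨?_, p i, p j, -1, -1, Or.inr rfl, Or.inr rfl, rfl⟩
  intro h
  have := congrFun h (p i)
  simp only [wF, Pi.add_apply, Pi.single_apply, Pi.zero_apply] at this
  split_ifs at this <;> omega

include hp in
lemma pr_Phi (S : Matrix (Fin (k+1)) (Fin (k+1)) ℂ) (i j : Fin (k+1)) :
    G.pr (wF p i j) (D.Phi S) = (if i = j then S i j else S i j + S j i) • D.F i j := by
  have h : ∀ a b, G.pr (wF p i j) (S a b • D.F a b) =
      (if a = i ∧ b = j then S i j • D.F i j else 0) +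
      (if a = j ∧ b = i ∧ i ≠ j then S j i • D.F i j else 0) := by
    intro a b
    rw [map_smul]
    by_cases h1 : a = i ∧ b = j
    · obtain ⟨rfl, rfl⟩ := h1
      rw [G.pr_same (D.hF a b), if_pos ⟨rfl, rfl⟩, if_neg, add_zero]
      rintro ⟨h1, h2, h3⟩; exact h3 h1
    · rw [if_neg h1, zero_add]
      by_cases h2 : a = j ∧ b = i
      · obtain ⟨rfl, rfl⟩ := h2
        have e : wF p b a = wF p a b := add_comm _ _
        rw [e, G.pr_same (D.hF a b), if_pos ⟨rfl, rfl, fun h => h1 ⟨h.symm, h⟩⟩, D.hFs a b]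
      · rw [if_neg (fun h => h2 ⟨h.1, h.2.1⟩), G.pr_ne (D.hF a b), smul_zero]
        intro h3
        rcases wF_inj hp h3 with ⟨rfl, rfl⟩ | ⟨rfl, rfl⟩
        · exact h1 ⟨rfl, rfl⟩
        · exact h2 ⟨rfl, rfl⟩
  rw [lc_apply, map_sum]
  simp only [map_sum, h, Finset.sum_add_distrib]
  have e1 : ∑ a, ∑ b, (if a = i ∧ b = j then S i j • D.F i j else 0) = S i j • D.F i j := by
    rw [Finset.sum_eq_single i, Finset.sum_eq_single j]
    · simp
    · intro b _ hb; simp [hb]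
    · simp
    · intro a _ ha; simp [ha]
    · simp
  have e2 : ∑ a, ∑ b, (if a = j ∧ b = i ∧ i ≠ j then S j i • D.F i j else 0) = 
      if i = j then 0 else S j i • D.F i j := by
    rw [Finset.sum_eq_single j, Finset.sum_eq_single i]
    · by_cases hij : i = j <;> simp [hij]
    · intro b _ hb; simp [hb]
    · simp
    · intro a _ ha; simp [ha]
    · simp
  rw [e1, e2]
  split_ifs
  · rw [add_zero]
  · rw [add_smul]

include hp in
lemma exists_Psi : ∃ Ψ : L →ₗ[ℂ] Matrix (Fin (k+1)) (Fin (k+1)) ℂ,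
    (∀ w, (Ψ w).transpose = Ψ w) ∧ Ψ (D.Phi 1) = 1 ∧
    ∀ w c, deg p c = -2 → G.pr c (D.Phi (Ψ w)) = G.pr c w := by
  have h1 : ∀ i j, ∃ l : L →ₗ[ℂ] ℂ, ∀ w, G.pr (wF p i j) w = l w • D.F i j := by
    intro i j
    obtain ⟨f, hf⟩ : ∃ f : Module.Dual ℂ L, f (D.F i j) ≠ 0 := by
      by_contra hcon
      push Not at hcon
      exact D.hFne i j ((Module.forall_dual_apply_eq_zero_iff ℂ _).1 hcon)
    refine ⟨(f (D.F i j))⁻¹ • f ∘ₗ G.pr (wF p i j), fun w => ?_⟩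
    obtain ⟨a, ha⟩ := G.exists_smul (wF_rt i j) (D.hF i j) (D.hFne i j) (G.pr_mem (wF p i j) w)
    simp only [LinearMap.smul_apply, LinearMap.comp_apply, ha, map_smul, smul_eq_mul]
    congr 1
    field_simp
  choose l hl using h1
  have hls : ∀ i j w, l i j w = l j i w := by
    intro i j w
    have e : wF p i j = wF p j i := add_comm _ _
    have := hl i j w
    rw [e, hl j i w, D.hFs j i] at this
    exact (smul_left_injective ℂ (D.hFne i j) this).symm
  let Ψ : L →ₗ[ℂ] Matrix (Fin (k+1)) (Fin (k+1)) ℂ :=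
    { toFun := fun w => Matrix.of fun i j => (if i = j then 1 else 1 / 2) * l i j w
      map_add' := by intro x y; ext i j; simp [mul_add]
      map_smul' := by intro a x; ext i j; simp; ring }
  have hΨ : ∀ w i j, Ψ w i j = (if i = j then 1 else 1 / 2) * l i j w := fun _ _ _ => rfl
  refine ⟨Ψ, ?_, ?_, ?_⟩
  · intro w
    ext i j
    rw [Matrix.transpose_apply, hΨ, hΨ, hls j i]
    simp only [eq_comm]
  · ext i j
    have := hl i j (D.Phi 1)
    rw [D.pr_Phi hp] at this
    have := smul_left_injective ℂ (D.hFne i j) this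
    rw [hΨ, ← this]
    by_cases hij : i = j
    · simp [hij]
    · simp [hij, Ne.symm hij]
  · intro w c hc
    by_cases hr : IsRt c
    · obtain ⟨i, j, rfl⟩ := deg_neg2 hp hr hc
      rw [D.pr_Phi hp, hl]
      congr 1
      rw [hΨ, hΨ, hls j i]
      by_cases hij : i = j
      · simp [hij]
      · simp [hij, Ne.symm hij]; ring
    · have h0 : c ≠ 0 := by rintro rfl; simp at hc
      rw [G.eq_zero_of_not (G.pr_mem c _) h0 hr, G.eq_zero_of_not (G.pr_mem c w) h0 hr]

include hp in
lemma Phi_mem (S : Matrix (Fin (k+1)) (Fin (k+1)) ℂ) : D.Phi S ∈ G.GS {c | deg p c = -2} := by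
  rw [lc_apply]
  exact sum_mem fun i _ => sum_mem fun j _ => Submodule.smul_mem _ _
    (G.GS_of_mem (D.hF i j) (deg_wF hp i j))

lemma key_K [FiniteDimensional ℂ L] {w w' : L}
    (h : ∀ c, deg p c = -2 → G.pr c w' = G.pr c w) {u : L} (hu : u ∈ G.GS {c | deg p c = 2}) :
    killingForm ℂ L w u = killingForm ℂ L w' u := by
  rw [← sub_eq_zero, ← LinearMap.sub_apply, ← map_sub]
  refine G.kill_GS (S := {c | deg p c ≠ -2}) ?_ ?_ hu
  · intro c hc d hd hcd
    have := congrArg (deg p) hcd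
    rw [map_add, map_zero] at this
    have h1 : deg p c ≠ -2 := hc
    have h2 : deg p d = 2 := hd
    omega
  · intro c hc
    have h1 : deg p c = -2 := by by_contra h'; exact hc h'
    rw [map_sub, h c h1, sub_self]

end EF
end SpAux

namespace SpAux

section
variable {L : Type*} [LieRing L] [LieAlgebra ℂ L] {m : ℕ} (G : CGrad L m)

lemma CGrad.exists_prS (S : Set (Fin m → ℤ)) (x : L) :
    ∃ y, ∀ d, G.pr d y = if d ∈ S then G.pr d x else 0 := by
  refine ⟨∑ c ∈ G.B.filter (· ∈ S), G.pr c x, fun d => ?_⟩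
  have hB : d ∉ G.B → G.pr d x = 0 := by
    intro hd
    rw [← G.pr_sum x, map_sum]
    refine Finset.sum_eq_zero fun c hc => G.pr_ne (G.pr_mem c x) ?_
    rintro rfl; exact hd hc
  rw [map_sum]
  by_cases h : d ∈ S
  · rw [if_pos h]
    by_cases hd : d ∈ G.B
    · rw [Finset.sum_eq_single d]
      · exact G.pr_pr d x
      · intro c _ hc; exact G.pr_ne (G.pr_mem c x) hc
      · intro h'; exact (h' (Finset.mem_filter.2 ⟨hd, h⟩)).elim
    · rw [hB hd]
      refine Finset.sum_eq_zero fun c hc => G.pr_ne (G.pr_mem c x) ?_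
      rintro rfl; exact hd (Finset.mem_filter.1 hc).1
  · rw [if_neg h]
    refine Finset.sum_eq_zero fun c hc => G.pr_ne (G.pr_mem c x) ?_
    rintro rfl; exact h (Finset.mem_filter.1 hc).2

/-- split an element along a set of weights -/
lemma CGrad.exists_dec (S T : Set (Fin m → ℤ)) {x : L} (hx : x ∈ G.GS T) :
    ∃ y ∈ G.GS (T ∩ S), ∃ z ∈ G.GS (T ∩ Sᶜ), x = y + z := by
  obtain ⟨y, hy⟩ := G.exists_prS S x
  refine ⟨y, ?_, x - y, ?_, by abel⟩
  · intro d hd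
    rw [hy]
    split_ifs with h
    · exact hx d fun h' => hd ⟨h', h⟩
    · rfl
  · intro d hd
    rw [map_sub, hy]
    split_ifs with h
    · exact sub_self _
    · rw [sub_zero]; exact hx d fun h' => hd ⟨h', h⟩

lemma CGrad.root_GS {S : Set (Fin m → ℤ)} (h0 : (0 : Fin m → ℤ) ∉ S) {x : L} (hx : x ∈ G.GS S) :
    x ∈ G.GS {c | c ∈ S ∧ IsRt c} := by
  intro d hd
  by_cases h : d ∈ S
  · exact G.eq_zero_of_not (G.pr_mem d x) (by rintro rfl; exact h0 h) fun h' => hd ⟨h, h'⟩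
  · exact hx d h

lemma CGrad.GS_empty {x : L} (hx : x ∈ G.GS ∅) : x = 0 := G.ext_pr fun c => hx c (by simp)

lemma CGrad.mem_univ (x : L) : x ∈ G.GS Set.univ := fun c hc => (hc trivial).elim

lemma kill_inv [FiniteDimensional ℂ L] (x y z : L) :
    killingForm ℂ L ⁅x, y⁆ z = killingForm ℂ L x ⁅y, z⁆ :=
  LieModule.traceForm_apply_lie_apply ℂ L L x y z

lemma deg_ge3 {k : ℕ} {p : Fin (k+1) → Fin m} (hp : Function.Injective p) {r s : ℤ}
    (hrs : 3 ≤ r + s) {x y : L} (hx : x ∈ G.GS {c | r ≤ deg p c})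
    (hy : y ∈ G.GS {c | s ≤ deg p c}) : ⁅x, y⁆ = 0 := by
  apply G.GS_empty
  refine G.GS_bracket ?_ hx hy
  intro c hc d hd h
  have h1 : r ≤ deg p c := hc
  have h2 : s ≤ deg p d := hd
  have h3 := deg_le_two hp h
  rw [map_add] at h3
  omega

lemma deg_br {k : ℕ} {p : Fin (k+1) → Fin m} {r s t : ℤ}
    (hrs : r + s = t) {x y : L} (hx : x ∈ G.GS {c | deg p c = r})
    (hy : y ∈ G.GS {c | deg p c = s}) : ⁅x, y⁆ ∈ G.GS {c | deg p c = t} := by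
  refine G.GS_bracket ?_ hx hy
  intro c hc d hd h
  have h1 : deg p c = r := hc
  have h2 : deg p d = s := hd
  change deg p (c + d) = t
  rw [map_add]
  omega
end

namespace EF
variable {L : Type*} [LieRing L] [LieAlgebra ℂ L] {m : ℕ} {G : CGrad L m} {k : ℕ}
    {p : Fin (k+1) → Fin m} (D : EF G p) (hp : Function.Injective p)

/-- stabilisers -/
def InN (G : CGrad L m) (p : Fin (k+1) → Fin m) (b : Fin (k+1) → ℕ) (w x : L) : Prop :=
  x ∈ G.GS (Nset p b) ∧ ∀ y ∈ G.GS (Nset p b), killingForm ℂ L w ⁅x, y⁆ = 0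

def InA (G : CGrad L m) (p : Fin (k+1) → Fin m) (b : Fin (k+1) → ℕ) (w x : L) : Prop :=
  x ∈ G.GS {c | deg p c = 2} ∧ ∀ y ∈ G.GS (N0 p b), killingForm ℂ L w ⁅x, y⁆ = 0

lemma deg_mem_N (b : Fin (k+1) → ℕ) {r : ℤ} (hr : r = 1 ∨ r = 2) {x : L}
    (hx : x ∈ G.GS {c | deg p c = r}) : x ∈ G.GS (Nset p b) := by
  refine G.GS_mono ?_ (G.root_GS ?_ hx)
  · rintro c ⟨h1, h2⟩
    have h1 : deg p c = r := h1
    refine ⟨h2, ?_⟩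
    rcases hr with rfl | rfl
    · exact Or.inl h1
    · exact Or.inr (Or.inl h1)
  · intro h
    have h : deg p (0 : Fin m → ℤ) = r := h
    rw [map_zero] at h
    omega

lemma N0_mono {b : Fin (k+1) → ℕ} (hb : Monotone b) : N0 p b ⊆ N0 p (fun i => (i : ℕ)) := by
  rintro c ⟨i, j, h, rfl⟩
  exact ⟨i, j, hb.reflect_lt h, rfl⟩

include hp in
lemma N0_sub (b : Fin (k+1) → ℕ) : N0 p b ⊆ Nset p b := fun _ hc =>
  ⟨N0_rt hp hc, Or.inr (Or.inr hc)⟩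

include hp in
lemma stepA [LieAlgebra.IsSimple ℂ L] [FiniteDimensional ℂ L]
    (hκ : ∀ x : L, (∀ y, killingForm ℂ L x y = 0) → x = 0)
    {b : Fin (k+1) → ℕ} (hb : Monotone b)
    {w : L} {S : Matrix (Fin (k+1)) (Fin (k+1)) ℂ} (hS : S.transpose = S) (hg : goodM S)
    (hw : ∀ c, deg p c = -2 → G.pr c (D.Phi S) = G.pr c w) {r : ℤ} (hr : r = 0 ∨ r = 1)
    {x : L} (hx : x ∈ G.GS (Nset p b ∩ {c | r ≤ deg p c}))
    (h : ∀ y ∈ G.GS (Nset p b), killingForm ℂ L w ⁅x, y⁆ = 0) :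
    x ∈ G.GS (Nset p b ∩ {c | r + 1 ≤ deg p c}) := by
  obtain ⟨x0, hx0, x1, hx1, rfl⟩ := G.exists_dec {c | deg p c = r} _ hx
  have hx1' : x1 ∈ G.GS (Nset p b ∩ {c | r + 1 ≤ deg p c}) := by
    refine G.GS_mono ?_ hx1
    rintro c ⟨⟨h1, h2⟩, h3⟩
    have h2 : r ≤ deg p c := h2
    have h3 : ¬ deg p c = r := h3
    refine ⟨h1, ?_⟩
    change r + 1 ≤ deg p c
    omega
  have hx1g : x1 ∈ G.GS {c | r + 1 ≤ deg p c} := G.GS_mono Set.inter_subset_right hx1'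
  have hx0g : x0 ∈ G.GS {c | deg p c = r} := G.GS_mono Set.inter_subset_right hx0
  have hx0P : x0 ∈ G.GS (Pset p) := by
    refine G.GS_mono ?_ hx0
    rintro c ⟨⟨⟨h1, h2⟩, -⟩, h3⟩
    have h3 : deg p c = r := h3
    refine ⟨h1, ?_⟩
    rcases h2 with h2 | h2 | h2
    · exact Or.inl h2
    · omega
    · exact Or.inr (N0_mono hb h2)
  suffices hz : x0 = 0 by rw [hz, zero_add]; exact hx1'
  refine D.inj hp hS hg hx0P (hκ _ fun y => ?_)
  obtain ⟨y0, hy0, y1, hy1, rfl⟩ := G.exists_dec {c | deg p c = 2 - r} _ (G.mem_univ y)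
  rw [Set.univ_inter] at hy0 hy1
  have hbr : ⁅D.Phi S, x0⁆ ∈ G.GS {c | deg p c = r - 2} :=
    deg_br G (by ring) (D.Phi_mem hp S) hx0g
  have h1 : killingForm ℂ L ⁅D.Phi S, x0⁆ y1 = 0 := by
    refine G.kill_GS ?_ hbr hy1
    intro c hc d hd hcd
    have := congrArg (deg p) hcd
    rw [map_add, map_zero] at this
    have h1 : deg p c = r - 2 := hc
    have h2 : ¬ deg p d = 2 - r := hd
    omega
  have h2 : ⁅x1, y0⁆ = 0 := deg_ge3 G hp (r := r + 1) (s := 2 - r) (by omega) hx1g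
    (G.GS_mono (fun c hc => le_of_eq (Eq.symm hc)) hy0)
  have h3 := h y0 (deg_mem_N b (by omega) hy0)
  rw [add_lie, h2, add_zero] at h3
  rw [map_add, h1, add_zero, kill_inv]
  rw [← key_K hw (deg_br G (by ring) hx0g hy0), h3]

include hp in
lemma N_iff_A [LieAlgebra.IsSimple ℂ L] [FiniteDimensional ℂ L]
    (hκ : ∀ x : L, (∀ y, killingForm ℂ L x y = 0) → x = 0)
    {b : Fin (k+1) → ℕ} (hb : Monotone b)
    {w : L} {S : Matrix (Fin (k+1)) (Fin (k+1)) ℂ} (hS : S.transpose = S) (hg : goodM S)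
    (hw : ∀ c, deg p c = -2 → G.pr c (D.Phi S) = G.pr c w) (x : L) :
    InN G p b w x ↔ InA G p b (D.Phi S) x := by
  have hN0 : ∀ y ∈ G.GS (N0 p b), y ∈ G.GS {c | deg p c = 0} := fun y hy =>
    G.GS_mono (fun c hc => N0_deg hp hc) hy
  constructor
  · rintro ⟨h1, h2⟩
    have hx0 : x ∈ G.GS (Nset p b ∩ {c | 0 ≤ deg p c}) := by
      refine G.GS_mono ?_ h1
      rintro c ⟨h3, h4⟩
      refine ⟨⟨h3, h4⟩, ?_⟩
      change 0 ≤ deg p c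
      rcases h4 with h4 | h4 | h4
      · omega
      · omega
      · rw [N0_deg hp h4]
    have hx1 := D.stepA hp hκ hb hS hg hw (Or.inl rfl) hx0 h2
    have hx2 := D.stepA hp hκ hb hS hg hw (Or.inr (zero_add 1)) hx1 h2
    have hx3 : x ∈ G.GS {c | deg p c = 2} := by
      refine G.GS_mono ?_ hx2
      rintro c ⟨⟨h3, -⟩, h4⟩
      have h4 : (0 : ℤ) + 1 + 1 ≤ deg p c := h4
      have := deg_le_two hp (Or.inr h3)
      change deg p c = 2
      omega
    refine ⟨hx3, fun y hy => ?_⟩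
    rw [← key_K hw (deg_br G (by ring) hx3 (hN0 y hy))]
    exact h2 y (G.GS_mono (N0_sub hp b) hy)
  · rintro ⟨h1, h2⟩
    refine ⟨deg_mem_N b (Or.inr rfl) h1, fun y hy => ?_⟩
    obtain ⟨y0, hy0, y1, hy1, rfl⟩ := G.exists_dec (N0 p b) _ hy
    have hy0' : y0 ∈ G.GS (N0 p b) := G.GS_mono Set.inter_subset_right hy0
    have h3 : ⁅x, y1⁆ = 0 := by
      refine deg_ge3 G hp (r := 2) (s := 1) (by omega)
        (G.GS_mono (fun c hc => le_of_eq (Eq.symm hc)) h1) (G.GS_mono ?_ hy1)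
      rintro c ⟨⟨-, h4⟩, h5⟩
      change 1 ≤ deg p c
      rcases h4 with h4 | h4 | h4
      · omega
      · omega
      · exact (h5 h4).elim
    rw [lie_add, h3, add_zero, key_K hw (deg_br G (by ring) h1 (hN0 y0 hy0'))]
    exact h2 y0 hy0'

include hp in
lemma A_iff [FiniteDimensional ℂ L] {b : Fin (k+1) → ℕ} (hb : Monotone b)
    {S : Matrix (Fin (k+1)) (Fin (k+1)) ℂ} (hS : S.transpose = S) (x : L) :
    InA G p b (D.Phi S) x ↔ x ∈ G.GS {c | deg p c = 2} ∧
      ∀ X ∈ strictB b, killingForm ℂ L (D.Phi (S * X)) x = 0 := by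
  have key : ∀ X ∈ strictB b, killingForm ℂ L (D.Phi S) ⁅x, D.eM X⁆ =
      - (2 * killingForm ℂ L (D.Phi (S * X)) x) := by
    intro X hX
    have hup : ∀ i j : Fin (k+1), ¬ i < j → X i j = 0 := fun i j h => hX i j (hb (not_lt.1 h))
    have h1 : D.Phi (X.transpose * S) = D.Phi (S * X) := by
      rw [← lc_transpose D.F D.hFs (S * X), Matrix.transpose_mul, hS]
    rw [← lie_skew, map_neg, ← kill_inv, ← lie_skew, map_neg, LinearMap.neg_apply, neg_neg,
      D.lie_rel X hup, rho_apply, map_neg, map_add, h1, map_neg, map_add,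
      LinearMap.neg_apply, LinearMap.add_apply, two_mul]
  constructor
  · rintro ⟨h1, h2⟩
    refine ⟨h1, fun X hX => ?_⟩
    have := h2 _ (D.eM_mem hX)
    rw [key X hX] at this
    simpa using this
  · rintro ⟨h1, h2⟩
    refine ⟨h1, fun y hy => ?_⟩
    obtain ⟨X, hX, rfl⟩ := D.eM_surj hp hb hy
    rw [key X hX, h2 X hX]; simp

include hp in
lemma A_block [FiniteDimensional ℂ L] {b : Fin (k+1) → ℕ} (hb : Monotone b)
    {S : Matrix (Fin (k+1)) (Fin (k+1)) ℂ} (hS : S.transpose = S) (hbt : S.BlockTriangular b)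
    (hu : IsUnit S.det) (x : L) : InA G p b (D.Phi S) x ↔ InA G p b (D.Phi 1) x := by
  rw [D.A_iff hp hb hS, D.A_iff hp hb Matrix.transpose_one]
  refine and_congr_right fun _ => ?_
  constructor
  · intro h X hX
    have := Matrix.invertibleOfIsUnitDet S hu
    have hi : S⁻¹.BlockTriangular b := Matrix.blockTriangular_inv_of_blockTriangular hbt
    have := h _ (blockT_mul_strictB hi hX)
    rwa [← mul_assoc, Matrix.mul_nonsing_inv S hu] at this
  · intro h X hX
    have := h _ (blockT_mul_strictB hbt hX)
    rwa [one_mul] at this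

include hp in
lemma conj [FiniteDimensional ℂ L] {b : Fin (k+1) → ℕ} (hb : Monotone b)
    {S : Matrix (Fin (k+1)) (Fin (k+1)) ℂ} (hS : S.transpose = S) (hg : goodM S) :
    ∃ x ∈ G.GS (N0 p b), ∀ z, InA G p b (D.Phi S) z ↔
      ∃ y, InA G p b (D.Phi 1) y ∧ nilExp (ad ℂ L x) y = z := by
  obtain ⟨X, hX, S', hS1, hS2, hS3, hS4⟩ := exists_block b hS hg
  obtain ⟨e, he1, he2, he3⟩ := exp_package (D.eM X) (D.eM_nilp hp hb hX)
  have hup : ∀ i j : Fin (k+1), ¬ i < j → X i j = 0 := fun i j h => hX i j (hb (not_lt.1 h))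
  have h1 := he3 _ D.Phi X (strictB_nilp hX) (D.lie_rel X hup) S'
  rw [← hS4] at h1
  have hZ := he2 (G.GS {c | deg p c = 2}) fun z hz => deg_br G (by ring)
    (G.GS_mono (fun c hc => N0_deg hp hc) (D.eM_mem hX)) hz
  have hN := he2 (G.GS (N0 p b)) fun z hz => G.GS_bracket (fun c hc d hd h => N0_add hp b hc hd h)
    (D.eM_mem hX) hz
  have key : ∀ y, InA G p b (D.Phi S) (e y) ↔ InA G p b (D.Phi 1) y := by
    intro y
    rw [← D.A_block hp hb hS1 hS2 hS3]
    unfold InA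
    rw [hZ]
    refine and_congr_right fun _ => ?_
    have hk : ∀ u, killingForm ℂ L (D.Phi S) ⁅e y, e u⁆ = killingForm ℂ L (D.Phi S') ⁅y, u⁆ := by
      intro u
      rw [← h1, ← LieEquiv.map_lie]
      exact LieAlgebra.killingForm_of_equiv_apply e _ _
    constructor
    · intro h u hu
      rw [← hk]; exact h _ ((hN u).2 hu)
    · intro h u hu
      obtain ⟨v, rfl⟩ : ∃ v, e v = u := ⟨e.symm u, e.apply_symm_apply u⟩
      rw [hk]; exact h _ ((hN v).1 hu)
  refine ⟨D.eM X, D.eM_mem hX, fun z => ?_⟩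
  constructor
  · intro h
    obtain ⟨v, rfl⟩ : ∃ v, e v = z := ⟨e.symm z, e.apply_symm_apply z⟩
    exact ⟨v, (key v).1 h, (he1 v).symm⟩
  · rintro ⟨y, hy, rfl⟩
    rw [← he1]; exact (key y).2 hy

lemma goodM_one (k : ℕ) : goodM (1 : Matrix (Fin k) (Fin k) ℂ) := by
  intro s
  have : (1 : Matrix (Fin k) (Fin k) ℂ).submatrix (fun i : s => (i : Fin k))
      (fun i : s => (i : Fin k)) = 1 := Matrix.submatrix_one _ Subtype.val_injective
  rw [this, Matrix.det_one]
  exact one_ne_zero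

include hp in
lemma main [LieAlgebra.IsSimple ℂ L] [FiniteDimensional ℂ L]
    (hκ : ∀ x : L, (∀ y, killingForm ℂ L x y = 0) → x = 0)
    {b : Fin (k+1) → ℕ} (hb : Monotone b)
    {Ψ : L →ₗ[ℂ] Matrix (Fin (k+1)) (Fin (k+1)) ℂ}
    (h1 : ∀ w, (Ψ w).transpose = Ψ w) 
    (h3 : ∀ w c, deg p c = -2 → G.pr c (D.Phi (Ψ w)) = G.pr c w) {w : L} (hg : goodM (Ψ w)) :
    ∃ x ∈ G.GS (Nset p b), ∀ z, InN G p b w z ↔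
      ∃ y, InN G p b (D.Phi 1) y ∧ nilExp (ad ℂ L x) y = z := by
  obtain ⟨x, hx, h⟩ := D.conj hp hb (h1 w) hg
  refine ⟨x, G.GS_mono (N0_sub hp b) hx, fun z => ?_⟩
  rw [D.N_iff_A hp hκ hb (h1 w) hg (h3 w), h]
  refine exists_congr fun y => and_congr_left fun _ => ?_
  rw [D.N_iff_A hp hκ hb Matrix.transpose_one (goodM_one _) fun _ _ => rfl]

end EF
end SpAux

namespace SpAux

lemma zar_good {L : Type*} [AddCommGroup L] [Module ℂ L] {k : ℕ}
    (Ψ : L →ₗ[ℂ] Matrix (Fin k) (Fin k) ℂ) (V : Submodule ℂ L) {v : L} (hv : v ∈ V)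
    (hg : goodM (Ψ v)) :
    zOpen {w : V | goodM (Ψ w)} ∧ zDense {w : V | goodM (Ψ w)} := by
  let P : V → ℂ := ∏ s : Finset (Fin k), fun w : V =>
    ((Ψ w).submatrix (fun i : s => (i : Fin k)) (fun i : s => (i : Fin k))).det
  have hP : P ∈ polyF V := by
    refine prod_mem fun s _ => ?_
    have : (fun w : V =>
        ((Ψ w).submatrix (fun i : s => (i : Fin k)) (fun i : s => (i : Fin k))).det) =
        ∑ σ : Equiv.Perm s, (Equiv.Perm.sign σ : ℤ) •
          ∏ i : s, (fun w : V => Ψ w (σ i : Fin k) (i : Fin k)) := by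
      funext w
      rw [Matrix.det_apply]
      simp [Finset.sum_apply, Finset.prod_apply, Units.smul_def]
    rw [this]
    refine sum_mem fun σ _ => zsmul_mem (prod_mem fun i _ => ?_) _
    refine Algebra.subset_adjoin ⟨?_, ?_⟩
    · exact (LinearMap.proj (i : Fin k)) ∘ₗ (LinearMap.proj (σ i : Fin k)) ∘ₗ
        (show L →ₗ[ℂ] (Fin k → Fin k → ℂ) from Ψ) ∘ₗ V.subtype
    · rfl
  have hset : {w : V | goodM (Ψ w)} = {w : V | P w ≠ 0} := by
    ext w
    simp only [P, Finset.prod_apply, goodM, Set.mem_ofPred_eq, ne_eq, Finset.prod_eq_zero_iff]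
    simp
  rw [hset]
  have h2 : (⟨v, hv⟩ : V) ∈ {w : V | P w ≠ 0} := by rw [← hset]; exact hg
  exact z_open_dense hP h2
end SpAux

namespace SpAux

/-- change of coordinates from simple roots to the `ε`-basis -/
def epsMap (m : ℕ) : (Fin m → ℤ) →+ (Fin m → ℤ) where
  toFun γ := fun i => (if (i : ℕ) + 1 = m then 2 else 1) * γ i -
    (if (i : ℕ) = 0 then 0 else γ ⟨(i : ℕ) - 1, by omega⟩)
  map_zero' := by funext i; simp
  map_add' := by
    intro x y
    funext i
    simp only [Pi.add_apply]
    split_ifs <;> ring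

lemma epsMap_apply {m : ℕ} (γ : Fin m → ℤ) (i : Fin m) :
    epsMap m γ i = (if (i : ℕ) + 1 = m then 2 else 1) * γ i -
    (if (i : ℕ) = 0 then 0 else γ ⟨(i : ℕ) - 1, by omega⟩) := rfl

lemma epsMap_sub {m : ℕ} (i j : Fin m) :
    epsMap m (epsSub i j) = Pi.single i 1 + Pi.single j (-1) := by
  funext l
  have := l.2
  have := i.2
  have := j.2
  simp only [epsMap_apply, epsSub, Pi.add_apply, Pi.single_apply, Fin.ext_iff, Fin.le_def]
  split_ifs <;> omega

lemma epsMap_add {m : ℕ} (i j : Fin m) :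
    epsMap m (epsAdd i j) = Pi.single i 1 + Pi.single j 1 := by
  funext l
  have := l.2
  have := i.2
  have := j.2
  simp only [epsMap_apply, epsAdd, Pi.add_apply, Pi.single_apply, Fin.ext_iff, Fin.le_def]
  split_ifs <;> omega

lemma epsMap_inj (m : ℕ) : Function.Injective (epsMap m) := by
  rw [injective_iff_map_eq_zero]
  intro γ h
  have key : ∀ n (hn : n < m), γ ⟨n, hn⟩ = 0 := by
    intro n
    induction n with
    | zero =>
      intro hn
      have := congrFun h ⟨0, hn⟩
      rw [epsMap_apply] at this
      simp at this
      split_ifs at this <;> omega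
    | succ n ih =>
      intro hn
      have := congrFun h ⟨n + 1, hn⟩
      rw [epsMap_apply] at this
      simp [ih (by omega)] at this
      split_ifs at this <;> omega
  funext i
  exact key i i.2

section
variable {L : Type*} [LieRing L] [LieAlgebra ℂ L] {m : ℕ} (td : TriangularData L (Fin m))
    (hC : ∀ γ : Fin m → ℤ, γ ∈ td.R ↔
      ∃ i j : Fin m, (i < j ∧ (γ = epsSub i j ∨ γ = -epsSub i j)) ∨
        (i ≤ j ∧ (γ = epsAdd i j ∨ γ = -epsAdd i j)))

lemma rt_same {i j : Fin m} {s : ℤ} (hs : s = 1 ∨ s = -1) :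
    IsRt (Pi.single i s + Pi.single j s : Fin m → ℤ) := by
  refine ⟨?_, i, j, s, s, hs, hs, rfl⟩
  intro h
  have := congrFun h i
  simp only [Pi.add_apply, Pi.single_apply, Pi.zero_apply] at this
  split_ifs at this <;> omega

include hC in
lemma rt_of_R {γ : Fin m → ℤ} (h : γ ∈ td.R) : IsRt (epsMap m γ) := by
  obtain ⟨i, j, ⟨h1, rfl | rfl⟩ | ⟨h1, rfl | rfl⟩⟩ := (hC γ).1 h
  · rw [epsMap_sub]; exact rt_pair h1.ne (Or.inl rfl) (Or.inr rfl)
  · rw [map_neg, epsMap_sub, neg_add, ← Pi.single_neg, ← Pi.single_neg, neg_neg]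
    exact rt_pair h1.ne (Or.inr rfl) (Or.inl rfl)
  · rw [epsMap_add]; exact rt_same (Or.inl rfl)
  · rw [map_neg, epsMap_add, neg_add, ← Pi.single_neg, ← Pi.single_neg]
    exact rt_same (Or.inr rfl)

include hC in
lemma R_of_rt {c : Fin m → ℤ} (h : IsRt c) : ∃ γ ∈ td.R, epsMap m γ = c := by
  have hsub : ∀ i j : Fin m, i ≠ j →
      ∃ γ ∈ td.R, epsMap m γ = Pi.single i 1 + Pi.single j (-1) := by
    intro i j hij
    rcases lt_or_gt_of_ne hij with h | h
    · exact ⟨epsSub i j, (hC _).2 ⟨i, j, Or.inl ⟨h, Or.inl rfl⟩⟩, epsMap_sub i j⟩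
    · refine ⟨-epsSub j i, (hC _).2 ⟨j, i, Or.inl ⟨h, Or.inr rfl⟩⟩, ?_⟩
      rw [map_neg, epsMap_sub, neg_add, ← Pi.single_neg, ← Pi.single_neg, neg_neg, add_comm]
  have hadd : ∀ i j : Fin m, ∃ γ ∈ td.R, epsMap m γ = Pi.single i 1 + Pi.single j 1 := by
    intro i j
    rcases le_total i j with h | h
    · exact ⟨epsAdd i j, (hC _).2 ⟨i, j, Or.inr ⟨h, Or.inl rfl⟩⟩, epsMap_add i j⟩
    · exact ⟨epsAdd j i, (hC _).2 ⟨j, i, Or.inr ⟨h, Or.inl rfl⟩⟩, by rw [epsMap_add, add_comm]⟩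
  obtain ⟨h0, i, j, s, s', rfl | rfl, rfl | rfl, rfl⟩ := h
  · exact hadd i j
  · refine hsub i j ?_
    rintro rfl
    apply h0
    rw [← Pi.single_add]; simp
  · rw [add_comm]
    refine hsub j i ?_
    rintro rfl
    apply h0
    rw [← Pi.single_add]; simp
  · obtain ⟨γ, h1, h2⟩ := hadd i j
    refine ⟨-γ, td.root_neg γ h1, ?_⟩
    rw [map_neg, h2, neg_add, ← Pi.single_neg, ← Pi.single_neg]

lemma td_disj {S S' : Set (Fin m → ℤ)} (h : Disjoint S S') :
    Disjoint (⨆ γ ∈ S, td.rs γ) (⨆ γ ∈ S', td.rs γ) := by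
  have hle : ∀ S : Set (Fin m → ℤ), (⨆ γ ∈ S, td.rs γ) ≤
      ⨆ γ ∈ {γ : {γ : Fin m → ℤ // γ = 0 ∨ γ ∈ td.R} | γ.1 ∈ S}, td.rs γ.1 := by
    intro S
    refine iSup₂_le fun γ hγ => ?_
    by_cases hR : γ = 0 ∨ γ ∈ td.R
    · exact le_iSup₂_of_le (⟨γ, hR⟩ : {γ : Fin m → ℤ // γ = 0 ∨ γ ∈ td.R}) hγ le_rfl
    · push Not at hR
      rw [td.rs_bot γ hR.1 hR.2]; exact bot_le
  refine Disjoint.mono (hle S) (hle S') ?_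
  refine td.isInternal.submodule_iSupIndep.disjoint_biSup_biSup ?_
  rw [Set.disjoint_left] at h ⊢
  intro γ h1 h2
  exact h h1 h2

def gC (c : Fin m → ℤ) : Submodule ℂ L := ⨆ γ ∈ {γ | epsMap m γ = c}, td.rs γ

lemma gC_eps (γ : Fin m → ℤ) : gC td (epsMap m γ) = td.rs γ := by
  have : {γ' | epsMap m γ' = epsMap m γ} = {γ} := by
    ext γ'; exact (epsMap_inj m).eq_iff
  rw [gC, this, iSup_singleton]

lemma mem_gC {c : Fin m → ℤ} {x : L} (hx : x ∈ gC td c) :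
    x = 0 ∨ ∃ γ, epsMap m γ = c ∧ x ∈ td.rs γ := by
  by_cases h : ∃ γ, epsMap m γ = c
  · obtain ⟨γ, rfl⟩ := h
    rw [gC_eps] at hx
    exact Or.inr ⟨γ, rfl, hx⟩
  · left
    have : {γ | epsMap m γ = c} = ∅ := by
      ext γ; simpa using fun h' => h ⟨γ, h'⟩
    rw [gC, this] at hx
    simpa using hx

lemma proj_same {S : Set (Fin m → ℤ)} {x : L} (hx : x ∈ ⨆ γ ∈ S, td.rs γ) : td.proj S x = x := by
  have h1 := td.proj_compl S x
  have h2 : x - td.proj S x ∈ ⨆ γ ∈ S, td.rs γ := sub_mem hx (td.proj_mem S x)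
  have := Submodule.disjoint_def.1 (td_disj td (disjoint_compl_right (a := S))) _ h2 h1
  exact (sub_eq_zero.1 this).symm

lemma proj_ne {S : Set (Fin m → ℤ)} {x : L} (hx : x ∈ ⨆ γ ∈ Sᶜ, td.rs γ) : td.proj S x = 0 := by
  have h1 : td.proj S x ∈ ⨆ γ ∈ Sᶜ, td.rs γ := by
    have := sub_mem hx (td.proj_compl S x)
    simpa using this
  exact Submodule.disjoint_def.1 (td_disj td (disjoint_compl_right (a := S))) _
    (td.proj_mem S x) h1

def mkG : CGrad L m where
  g := gC td
  pr c := td.proj {γ | epsMap m γ = c}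
  B := (insert 0 td.R).image (epsMap m)
  bracket := by
    intro c d x y hx hy
    rcases mem_gC td hx with rfl | ⟨γ, rfl, hx2⟩
    · rw [zero_lie]; exact zero_mem _
    rcases mem_gC td hy with rfl | ⟨δ, rfl, hy2⟩
    · rw [lie_zero]; exact zero_mem _
    rw [← map_add, gC_eps]
    exact td.bracket_mem _ _ _ hx2 _ hy2
  pr_mem c x := td.proj_mem _ x
  pr_same := by
    intro c x hx
    exact proj_same td hx
  pr_ne := by
    intro c d x hx hcd
    refine proj_ne td ?_
    refine (biSup_mono ?_ : (⨆ γ ∈ {γ | epsMap m γ = c}, td.rs γ) ≤ _) hx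
    intro γ h1 h2
    exact hcd (Eq.trans (Eq.symm h1) h2)
  pr_sum := by
    intro x
    have hx : x ∈ (⨆ γ : {γ : Fin m → ℤ // γ = 0 ∨ γ ∈ td.R}, td.rs γ.1) := by
      rw [td.isInternal.submodule_iSup_eq_top]; trivial
    induction hx using Submodule.iSup_induction' with
    | mem γ x hx =>
      rw [Finset.sum_eq_single (epsMap m γ.1)]
      · apply proj_same td
        have := gC_eps td γ.1
        rw [gC] at this
        rw [this]; exact hx
      · intro c _ hc
        refine proj_ne td ?_
        exact (le_iSup₂_of_le γ.1 (fun h => hc (Eq.symm h)) le_rfl : td.rs γ.1 ≤ _) hx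
      · intro h
        refine (h (Finset.mem_image_of_mem _ ?_)).elim
        rw [Finset.mem_insert]; exact γ.2
    | zero => simp
    | add x y _ _ hx hy =>
      simp only [map_add, Finset.sum_add_distrib, hx, hy]
  off := by
    intro c hc0 hc
    rw [eq_bot_iff]
    intro x hx
    rcases mem_gC td hx with rfl | ⟨γ, rfl, hx2⟩
    · simp
    · rw [td.rs_bot γ] at hx2
      · exact hx2
      · rintro rfl; exact hc0 (map_zero _)
      · intro h; exact hc (rt_of_R td hC h)
  dim := by
    intro c hc
    obtain ⟨γ, hγ, rfl⟩ := R_of_rt td hC hc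
    rw [gC_eps, td.rs_dim γ hγ]

/-- sums of root spaces agree -/
lemma mkG_GS (S : Set (Fin m → ℤ)) (S' : Set (Fin m → ℤ))
    (h : ∀ γ, γ ∈ S ↔ epsMap m γ ∈ S') : (mkG td hC).GS S' = ⨆ γ ∈ S, td.rs γ := by
  apply le_antisymm
  · apply (mkG td hC).GS_le
    intro c hc x hx
    rcases mem_gC td hx with rfl | ⟨γ, rfl, hx2⟩
    · exact zero_mem _
    · exact (le_iSup₂_of_le γ ((h γ).2 hc) le_rfl : td.rs γ ≤ _) hx2
  · refine iSup₂_le fun γ hγ x hx => ?_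
    refine (mkG td hC).GS_of_mem (c := epsMap m γ) ?_ ((h γ).1 hγ)
    change x ∈ gC td _
    rw [gC_eps]; exact hx

end
end SpAux

namespace SpAux

lemma mem_nilRoots' {L SR : Type*} [LieRing L] [LieAlgebra ℂ L] [Fintype SR] [DecidableEq SR]
    (td : TriangularData L SR) (T : Finset SR) (γ : SR → ℤ) :
    γ ∈ td.nilRoots T ↔ ((γ ∈ td.R ∧ ∀ a, 0 ≤ γ a) ∧ ∃ a ∈ T, 0 < γ a) :=
  Finset.mem_filter.trans (and_congr_left' Finset.mem_filter)

section
variable {m : ℕ} {k : ℕ} (hk : k + 1 ≤ m)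

def bT (T : Finset (Fin m)) (k : ℕ) : Fin (k+1) → ℕ := fun i =>
  (T.filter fun a : Fin m => (a : ℕ) < (i : ℕ)).card

lemma bT_mono (T : Finset (Fin m)) (k : ℕ) : Monotone (bT T k) := by
  intro i j hij
  refine Finset.card_le_card fun a => ?_
  simp only [Finset.mem_filter]
  rintro ⟨h1, h2⟩
  exact ⟨h1, lt_of_lt_of_le h2 hij⟩

lemma bT_lt {T : Finset (Fin m)} {k : ℕ} {i j : Fin (k+1)} {a : Fin m} (ha : a ∈ T)
    (h1 : (i : ℕ) ≤ a) (h2 : (a : ℕ) < j) : bT T k i < bT T k j := by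
  refine Finset.card_lt_card ⟨fun x => ?_, fun h => ?_⟩
  · simp only [Finset.mem_filter]
    rintro ⟨h3, h4⟩
    exact ⟨h3, by omega⟩
  · have := Finset.mem_filter.1 (h (Finset.mem_filter.2 ⟨ha, h2⟩))
    omega

lemma lt_bT {T : Finset (Fin m)} {k : ℕ} {i j : Fin (k+1)} (h : bT T k i < bT T k j) :
    ∃ a ∈ T, (i : ℕ) ≤ a ∧ (a : ℕ) < j := by
  by_contra hcon
  push Not at hcon
  refine not_le.2 h (Finset.card_le_card fun a => ?_)
  simp only [Finset.mem_filter]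
  rintro ⟨h1, h2⟩
  refine ⟨h1, ?_⟩
  by_contra h3
  have := hcon a h1 (by omega)
  omega

def pK : Fin (k+1) → Fin m := Fin.castLE hk

lemma pK_val (i : Fin (k+1)) : ((pK hk i : Fin m) : ℕ) = i := rfl

lemma pK_inj : Function.Injective (pK hk) := Fin.castLE_injective hk

lemma pK_of_le {l : Fin m} (h : (l : ℕ) ≤ k) : ∃ i, pK hk i = l := 
  ⟨⟨l, by omega⟩, Fin.ext rfl⟩

lemma deg_if (l : Fin m) (s : ℤ) :
    deg (pK hk) (Pi.single l s) = if (l : ℕ) ≤ k then s else 0 := by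
  split_ifs with h
  · obtain ⟨i, rfl⟩ := pK_of_le hk h
    exact deg_single (pK_inj hk) i s
  · refine deg_single_out (pK_inj hk) ?_ s
    rintro i rfl
    rw [pK_val] at h
    have := i.2
    omega

lemma diff_inj {i j a b : Fin m} (hij : i ≠ j) (hab : a ≠ b)
    (h : (Pi.single i 1 + Pi.single j (-1) : Fin m → ℤ) = Pi.single a 1 + Pi.single b (-1)) :
    i = a ∧ j = b := by
  have h1 := congrFun h i
  have h2 := congrFun h j
  simp only [Pi.add_apply, Pi.single_apply] at h1 h2
  constructor
  · by_contra hne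
    simp only [if_neg hij, if_neg hne] at h1
    split_ifs at h1 <;> omega
  · by_contra hne
    simp only [if_neg (Ne.symm hij), if_neg hne] at h2
    split_ifs at h2 <;> omega

variable {L : Type*} [LieRing L] [LieAlgebra ℂ L] (td : TriangularData L (Fin m))
    (hC : ∀ γ : Fin m → ℤ, γ ∈ td.R ↔
      ∃ i j : Fin m, (i < j ∧ (γ = epsSub i j ∨ γ = -epsSub i j)) ∨
        (i ≤ j ∧ (γ = epsAdd i j ∨ γ = -epsAdd i j)))

include hC in
lemma nilRoots_iff {T : Finset (Fin m)} {t : Fin m} (ht : t ∈ T) (hmax : ∀ a ∈ T, (a : ℕ) ≤ t)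
    (hk : (t : ℕ) + 1 ≤ m) (γ : Fin m → ℤ) :
    γ ∈ td.nilRoots T ↔ epsMap m γ ∈ Nset (pK hk) (bT T t) := by
  have hsubval : ∀ i j a : Fin m, epsSub i j a =
    (if (i : ℕ) ≤ a then 1 else 0) - (if (j : ℕ) ≤ a then 1 else 0) := fun _ _ _ => rfl
  have haddval : ∀ i j a : Fin m, epsAdd i j a = if (a : ℕ) = m - 1 then 1 else
    (if (i : ℕ) ≤ a then 1 else 0) + (if (j : ℕ) ≤ a then 1 else 0) := fun _ _ _ => rfl
  have hmem : γ ∈ td.nilRoots T ↔ ((γ ∈ td.R ∧ ∀ a, 0 ≤ γ a) ∧ ∃ a ∈ T, 0 < γ a) :=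
    mem_nilRoots' td T γ
  rw [hmem]
  constructor
  · rintro ⟨⟨hR, hpos⟩, a, haT, ha⟩
    refine ⟨rt_of_R td hC hR, ?_⟩
    have hat := hmax a haT
    have ham := a.2
    obtain ⟨i, j, ⟨h1, rfl | rfl⟩ | ⟨h1, rfl | rfl⟩⟩ := (hC γ).1 hR
    · have h1' : (i : ℕ) < j := h1
      rw [hsubval] at ha
      have hia : (i : ℕ) ≤ a := by split_ifs at ha <;> omega
      have haj : (a : ℕ) < j := by split_ifs at ha <;> omega
      rw [epsMap_sub, map_add, deg_if, deg_if, if_pos (by omega)]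
      by_cases hj : (j : ℕ) ≤ t
      · right; right
        obtain ⟨i', rfl⟩ := pK_of_le hk (l := i) (by omega)
        obtain ⟨j', rfl⟩ := pK_of_le hk (l := j) hj
        exact ⟨i', j', bT_lt haT hia haj, rfl⟩
      · left; rw [if_neg hj]; rfl
    · have h1' : (i : ℕ) < j := h1
      rw [Pi.neg_apply, hsubval] at ha
      split_ifs at ha <;> omega
    · have h1' : (i : ℕ) ≤ j := h1
      rw [haddval] at ha
      have hia : (i : ℕ) ≤ a := by
        have := i.2
        split_ifs at ha <;> omega
      rw [epsMap_add, map_add, deg_if, deg_if, if_pos (by omega)]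
      split_ifs <;> simp
    · rw [Pi.neg_apply, haddval] at ha
      split_ifs at ha <;> omega
  · rintro ⟨hrt, h⟩
    obtain ⟨γ', hR, he⟩ := R_of_rt td hC hrt
    obtain rfl := epsMap_inj m he
    clear he
    have htm := t.2
    obtain ⟨i, j, ⟨h1, rfl | rfl⟩ | ⟨h1, rfl | rfl⟩⟩ := (hC γ').1 hR
    · have h1' : (i : ℕ) < j := h1
      refine ⟨⟨hR, fun a => ?_⟩, ?_⟩
      · rw [hsubval]; split_ifs <;> omega
      suffices hs : ∃ a ∈ T, (i : ℕ) ≤ a ∧ (a : ℕ) < j by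
        obtain ⟨a, ha, h3, h4⟩ := hs
        refine ⟨a, ha, ?_⟩
        rw [hsubval, if_pos h3, if_neg (by omega)]; norm_num
      rw [epsMap_sub, map_add, deg_if, deg_if] at h
      rcases h with h | h | ⟨i', j', hb, h⟩
      · refine ⟨t, ht, ?_⟩
        split_ifs at h <;> omega
      · split_ifs at h <;> omega
      · obtain ⟨rfl, rfl⟩ := diff_inj h1.ne ((pK_inj hk).ne (by rintro rfl; omega)) h
        exact lt_bT hb
    · exfalso
      have h1' : (i : ℕ) < j := h1
      have e : epsMap m (-epsSub i j) = Pi.single j 1 + Pi.single i (-1) := by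
        rw [map_neg, epsMap_sub, neg_add, ← Pi.single_neg, ← Pi.single_neg, neg_neg, add_comm]
      rw [e, map_add, deg_if, deg_if] at h
      rcases h with h | h | ⟨i', j', hb, h⟩
      · split_ifs at h <;> omega
      · split_ifs at h <;> omega
      · obtain ⟨rfl, rfl⟩ := diff_inj h1.ne' ((pK_inj hk).ne (by rintro rfl; omega)) h
        have : i' < j' := (bT_mono T t).reflect_lt hb
        have h5 : (i' : ℕ) < j' := this
        rw [pK_val, pK_val] at h1'
        omega
    · have h1' : (i : ℕ) ≤ j := h1
      refine ⟨⟨hR, fun a => ?_⟩, t, ht, ?_⟩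
      · rw [haddval]; split_ifs <;> omega
      have hi : (i : ℕ) ≤ t := by
        by_contra hi
        rw [epsMap_add, map_add, deg_if, deg_if, if_neg hi, if_neg (by omega)] at h
        rcases h with h | h | ⟨i', j', hb, h⟩
        · omega
        · omega
        · have := congrFun h (pK hk i')
          have h6 : pK hk i' ≠ i := by
            rintro rfl; rw [pK_val] at hi; have := i'.2; omega
          have h7 : pK hk i' ≠ j := by
            rintro rfl; rw [pK_val] at h1'; have := i'.2; omega
          have h8 : pK hk i' ≠ pK hk j' := (pK_inj hk).ne (by rintro rfl; omega)
          simp [wE, Pi.single_apply, h6, h7, h8] at this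
      rw [haddval, if_pos hi]
      split_ifs <;> norm_num
    · exfalso
      have e : epsMap m (-epsAdd i j) = Pi.single i (-1) + Pi.single j (-1) := by
        rw [map_neg, epsMap_add, neg_add, ← Pi.single_neg, ← Pi.single_neg]
      rw [e, map_add, deg_if, deg_if] at h
      rcases h with h | h | ⟨i', j', hb, h⟩
      · split_ifs at h <;> omega
      · split_ifs at h <;> omega
      · have := congrFun h (pK hk i')
        have h8 : pK hk i' ≠ pK hk j' := (pK_inj hk).ne (by rintro rfl; omega)
        simp only [wE, Pi.add_apply, Pi.single_apply, if_neg h8] at this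
        split_ifs at this <;> simp_all

lemma Nset_add {p : Fin (k+1) → Fin m} (hp : Function.Injective p) {b : Fin (k+1) → ℕ}
    {c d : Fin m → ℤ} (hc : c ∈ Nset p b) (hd : d ∈ Nset p b)
    (h : c + d = 0 ∨ IsRt (c + d)) : c + d ∈ Nset p b := by
  have h2 := deg_le_two hp h
  have key : 1 ≤ deg p (c + d) → c + d ∈ Nset p b := by
    intro h3
    refine ⟨?_, ?_⟩
    · rcases h with h | h
      · rw [h, map_zero] at h3; omega
      · exact h
    · have : deg p (c + d) = 1 ∨ deg p (c + d) = 2 := by omega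
      tauto
  have hge : ∀ c ∈ Nset p b, 0 ≤ deg p c := by
    rintro c ⟨_, h | h | h⟩
    · omega
    · omega
    · rw [N0_deg hp h]
  have hc0 := hge c hc
  have hd0 := hge d hd
  rw [map_add] at key
  rcases hc.2 with h3 | h3 | h3
  · exact key (by omega)
  · exact key (by omega)
  rcases hd.2 with h4 | h4 | h4
  · exact key (by omega)
  · exact key (by omega)
  have := N0_add hp b h3 h4 h
  exact ⟨N0_rt hp this, Or.inr (Or.inr this)⟩

lemma mem_nilrad {T : Finset (Fin m)} {p : Fin (k+1) → Fin m} (hp : Function.Injective p)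
    {b : Fin (k+1) → ℕ} (h : ∀ γ, γ ∈ td.nilRoots T ↔ epsMap m γ ∈ Nset p b) (x : L) :
    x ∈ td.nilrad T ↔ x ∈ (mkG td hC).GS (Nset p b) := by
  have hG := mkG_GS td hC (td.nilRoots T : Set (Fin m → ℤ)) (Nset p b) (fun γ => by simpa using h γ)
  constructor
  · intro hx
    let A : LieSubalgebra ℂ L :=
      { (mkG td hC).GS (Nset p b) with
        lie_mem' := fun {x y} hx hy =>
          (mkG td hC).GS_bracket (fun c hc d hd h => Nset_add hp hc hd h) hx hy }
    have : td.nilrad T ≤ A := by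
      rw [TriangularData.nilrad, LieSubalgebra.lieSpan_le]
      refine Set.iUnion₂_subset fun γ hγ x hx => ?_
      change x ∈ (mkG td hC).GS (Nset p b)
      rw [hG]
      exact (le_iSup₂_of_le γ hγ le_rfl : td.rs γ ≤ _) hx
    exact this hx
  · intro hx
    rw [hG] at hx
    have : (⨆ γ ∈ (td.nilRoots T : Set (Fin m → ℤ)), td.rs γ) ≤ (td.nilrad T).toSubmodule := by
      refine iSup₂_le fun γ hγ x hx => ?_
      exact LieSubalgebra.subset_lieSpan (Set.mem_iUnion₂.2 ⟨γ, hγ, hx⟩)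
    exact this hx

lemma trivial_case (T : Finset (Fin m))
    (h : ∀ v w : L, killStab v (td.nilrad T) (td.nilrad T) = killStab w (td.nilrad T) (td.nilrad T)) :
    td.IsGenericStabPoint T (td.nilrad T) 0 := by
  refine ⟨Set.univ, ?_, ?_, ⟨zero_mem _, trivial⟩, fun w _ => ⟨0, zero_mem _, ?_⟩⟩
  · exact (zariskiTop _).isOpen_univ
  · exact @dense_univ _ (zariskiTop _)
  · have h0 : nilExp (ad ℂ L (0 : L)) = 1 := by
      rw [nilExp, Finset.sum_eq_single 0]
      · simp
      · intro i _ hi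
        rw [map_zero, zero_pow hi, smul_zero]
      · simp
    rw [h0]
    exact (Submodule.map_id _).trans (h _ _)

include hC in
lemma final [FiniteDimensional ℂ L] [LieAlgebra.IsSimple ℂ L] (T : Finset (Fin m)) :
    ∃ w : L, td.IsGenericStabPoint T (td.nilrad T) w := by
  rcases T.eq_empty_or_nonempty with rfl | hT
  · refine ⟨0, trivial_case td ∅ fun v w => ?_⟩
    have h0 : ∀ x, x ∈ td.nilrad ∅ → x = 0 := by
      intro x hx
      have : td.nilrad ∅ ≤ ⊥ := by
        rw [TriangularData.nilrad, LieSubalgebra.lieSpan_le]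
        refine Set.iUnion₂_subset fun γ hγ => ?_
        simp [TriangularData.nilRoots] at hγ
      simpa using this hx
    have h1 : ∀ v : L, killStab v (td.nilrad ∅) (td.nilrad ∅) = ⊥ := by
      intro v
      rw [eq_bot_iff]
      rintro x ⟨hx, -⟩
      rw [h0 x hx]; exact zero_mem _
    rw [h1, h1]
  by_cases hκ : ∀ x : L, (∀ y, killingForm ℂ L x y = 0) → x = 0
  swap
  · have hz : ∀ x y : L, killingForm ℂ L x y = 0 := by
      rcases LieAlgebra.IsSimple.eq_bot_or_eq_top (R := ℂ) (LieIdeal.killingCompl ℂ L ⊤) with h | h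
      · exfalso
        apply hκ
        intro x hx
        have : x ∈ LieIdeal.killingCompl ℂ L ⊤ := by
          rw [LieIdeal.mem_killingCompl]
          intro y _
          rw [LieModule.traceForm_comm]
          exact hx y
        rw [h] at this
        simpa using this
      · intro x y
        have : y ∈ LieIdeal.killingCompl ℂ L ⊤ := by rw [h]; trivial
        rw [LieIdeal.mem_killingCompl] at this
        exact this x trivial
    refine ⟨0, trivial_case td T fun v w => ?_⟩
    ext x
    change (_ ∧ _) ↔ (_ ∧ _)
    simp only [hz]
  obtain ⟨t, ht, hmax⟩ := T.exists_max_image (fun a : Fin m => (a : ℕ)) hT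
  have hk : (t : ℕ) + 1 ≤ m := t.2
  have hp := pK_inj hk
  have hroots := nilRoots_iff td hC ht hmax hk
  let G := mkG td hC
  obtain ⟨D⟩ := exists_EF' G (pK hk) hp
  obtain ⟨Ψ, hΨ1, hΨ2, hΨ3⟩ := D.exists_Psi hp
  have hneg := mkG_GS td hC (td.negSet T) {c | -c ∈ Nset (pK hk) (bT T t)} (fun γ => by
    rw [Set.mem_ofPred_eq, ← map_neg, ← hroots, TriangularData.negSet]
    constructor
    · rintro ⟨δ, hδ, rfl⟩; simpa using hδ
    · intro h; exact ⟨-γ, h, neg_neg γ⟩)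
  have hv : D.Phi 1 ∈ td.negNilSub T := by
    rw [TriangularData.negNilSub, ← hneg]
    refine (mkG td hC).GS_mono ?_ ((mkG td hC).root_GS ?_ (D.Phi_mem hp 1))
    · rintro c ⟨h1, h2, i, j, s, s', hs, hs', rfl⟩
      have h1 : deg (pK hk) _ = -2 := h1
      refine ⟨⟨neg_ne_zero.2 h2, i, j, -s, -s', by omega, by omega, ?_⟩, Or.inr (Or.inl ?_)⟩
      · rw [neg_add, Pi.single_neg, Pi.single_neg]
      · rw [map_neg, h1]; rfl
    · intro h
      have h : deg (pK hk) (0 : Fin m → ℤ) = -2 := h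
      rw [map_zero] at h
      omega
  have hgv : goodM (Ψ (D.Phi 1)) := by rw [hΨ2]; exact EF.goodM_one _
  obtain ⟨hO, hDn⟩ := zar_good Ψ (td.negNilSub T) hv hgv
  have hmem := mem_nilrad td hC hp hroots
  have hstab : ∀ w x : L, x ∈ killStab w (td.nilrad T) (td.nilrad T) ↔
      EF.InN G (pK hk) (bT T t) w x := by
    intro w x
    change (x ∈ td.nilrad T ∧ ∀ y ∈ td.nilrad T, killingForm ℂ L w ⁅x, y⁆ = 0) ↔ _
    simp only [hmem]
    rfl
  refine ⟨D.Phi 1, _, hO, hDn, ⟨hv, hgv⟩, fun w hw => ?_⟩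
  obtain ⟨x, hx, h⟩ := D.main hp hκ (bT_mono T t) hΨ1 hΨ3 hw
  refine ⟨x, (hmem x).2 hx, ?_⟩
  ext z
  rw [hstab, h, Submodule.mem_map]
  simp only [hstab]

end
end SpAux

/-- If `g = sp_{2m}(ℂ)` (a simple Lie algebra whose root system is of
type `C_m` in simple-root coordinates), then for every nilradical `n` of a standard
parabolic subalgebra of `g` the coadjoint representation `(n : n*)` has a
generic stabiliser. -/
theorem spCase_always_generic_stabiliser
    {L : Type*} [LieRing L] [LieAlgebra ℂ L] [FiniteDimensional ℂ L]
    [LieAlgebra.IsSimple ℂ L]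
    {m : ℕ} (hm : 0 < m) (td : TriangularData L (Fin m))
    (hC : ∀ γ : Fin m → ℤ, γ ∈ td.R ↔
      ∃ i j : Fin m, (i < j ∧ (γ = epsSub i j ∨ γ = -epsSub i j)) ∨
        (i ≤ j ∧ (γ = epsAdd i j ∨ γ = -epsAdd i j))) :
    ∀ T : Finset (Fin m), ∃ w : L, td.IsGenericStabPoint T (td.nilrad T) w := by
  intro T
  exact SpAux.final td hC T

end
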